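/- Let R > 0, C > 0, and let v be a C² function on the punctured disk {z ∈ ℝ² : 0 < |z| < R} that is bounded from below and satisfies 0 ≤ -Δv ≤ C·e^{2v} there. Then either v extends to a C¹ function on a neighborhood of the origin, or there exists a finite positive number m₁ such that v(z)/log(1/|z|) → m₁ as |z| → 0⁺. -/

import Mathlib

open MeasureTheory Filter Metric
open scoped ENNReal

/-- The Euclidean Laplacian of a function on `ℝ²`:
`Δv = ∂²v/∂x² + ∂²v/∂y²`. -/
noncomputable def lap (v : EuclideanSpace ℝ (Fin 2) → ℝ)
    (z : EuclideanSpace ℝ (Fin 2)) : ℝ :=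
  fderiv ℝ (fun w => fderiv ℝ v w (EuclideanSpace.single 0 1)) z (EuclideanSpace.single 0 1) +
  fderiv ℝ (fun w => fderiv ℝ v w (EuclideanSpace.single 1 1)) z (EuclideanSpace.single 1 1)

/-- The Euclidean plane. -/
abbrev Plane := EuclideanSpace ℝ (Fin 2)

namespace Plane

/-- The partial derivative in the direction of the `i`-th coordinate. -/
noncomputable def pd (i : Fin 2) (v : Plane → ℝ) (z : Plane) : ℝ :=
  fderiv ℝ v z (EuclideanSpace.single i 1)

/-- The pairing of the gradients of two functions. -/
noncomputable def gdot (u v : Plane → ℝ) (z : Plane) : ℝ :=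
  pd 0 u z * pd 0 v z + pd 1 u z * pd 1 v z

lemma lap_eq_pd (v : Plane → ℝ) (z : Plane) : lap v z = pd 0 (pd 0 v) z + pd 1 (pd 1 v) z := rfl

lemma abs_pd_le (i : Fin 2) (v : Plane → ℝ) (z : Plane) : |pd i v z| ≤ ‖fderiv ℝ v z‖ := by
  simpa [pd] using (fderiv ℝ v z).le_opNorm (EuclideanSpace.single i 1)

lemma abs_gdot_le (u v : Plane → ℝ) (z : Plane) :
    |gdot u v z| ≤ 2 * (‖fderiv ℝ u z‖ * ‖fderiv ℝ v z‖) := by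
  unfold gdot
  refine (abs_add_le _ _).trans ?_
  rw [abs_mul, abs_mul, two_mul]
  gcongr <;> exact abs_pd_le _ _ _

lemma _root_.Filter.EventuallyEq.pd_eq {u v : Plane → ℝ} {z : Plane} (h : u =ᶠ[nhds z] v)
    (i : Fin 2) : pd i u z = pd i v z := by
  unfold pd; rw [h.fderiv_eq]

lemma _root_.Filter.EventuallyEq.pd {u v : Plane → ℝ} {z : Plane} (h : u =ᶠ[nhds z] v)
    (i : Fin 2) : pd i u =ᶠ[nhds z] pd i v :=
  h.eventuallyEq_nhds.mono fun _ hy => hy.pd_eq i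

lemma _root_.Filter.EventuallyEq.lap_eq {u v : Plane → ℝ} {z : Plane} (h : u =ᶠ[nhds z] v) :
    lap u z = lap v z := by
  rw [lap_eq_pd, lap_eq_pd, (h.pd 0).pd_eq 0, (h.pd 1).pd_eq 1]

lemma _root_.Filter.EventuallyEq.gdot_eq {u v w : Plane → ℝ} {z : Plane} (h : u =ᶠ[nhds z] v) :
    gdot u w z = gdot v w z := by
  unfold gdot; rw [h.pd_eq 0, h.pd_eq 1]

lemma pd_contDiffAt {v : Plane → ℝ} {z : Plane} {n m : WithTop ℕ∞} (hv : ContDiffAt ℝ n v z)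
    (hnm : m + 1 ≤ n) (i : Fin 2) : ContDiffAt ℝ m (pd i v) z :=
  (hv.fderiv_right hnm).clm_apply contDiffAt_const

lemma pd_differentiableAt {v : Plane → ℝ} {z : Plane} (hv : ContDiffAt ℝ 2 v z) (i : Fin 2) :
    DifferentiableAt ℝ (pd i v) z :=
  (pd_contDiffAt (m := 1) hv (by norm_num) i).differentiableAt (by norm_num)

lemma lap_contDiffAt {v : Plane → ℝ} {z : Plane} {n m : WithTop ℕ∞} (hv : ContDiffAt ℝ n v z)
    (hnm : m + 1 + 1 ≤ n) : ContDiffAt ℝ m (lap v) z :=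
  (pd_contDiffAt (pd_contDiffAt hv hnm 0) le_rfl 0).add
    (pd_contDiffAt (pd_contDiffAt hv hnm 1) le_rfl 1)

lemma gdot_contDiffAt {u v : Plane → ℝ} {z : Plane} {n m : WithTop ℕ∞} (hu : ContDiffAt ℝ n u z)
    (hv : ContDiffAt ℝ n v z) (hnm : m + 1 ≤ n) : ContDiffAt ℝ m (gdot u v) z :=
  ((pd_contDiffAt hu hnm 0).mul (pd_contDiffAt hv hnm 0)).add
    ((pd_contDiffAt hu hnm 1).mul (pd_contDiffAt hv hnm 1))

lemma eventually_contDiffAt {v : Plane → ℝ} {z : Plane} (hv : ContDiffAt ℝ 2 v z) :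
    ∀ᶠ y in nhds z, ContDiffAt ℝ 2 v y :=
  hv.eventually (by simp)

lemma eventually_differentiableAt {v : Plane → ℝ} {z : Plane} (hv : ContDiffAt ℝ 2 v z) :
    ∀ᶠ y in nhds z, DifferentiableAt ℝ v y :=
  (eventually_contDiffAt hv).mono fun _ hy => hy.differentiableAt (by norm_num)

lemma pd_mul {u v : Plane → ℝ} {z : Plane} (hu : DifferentiableAt ℝ u z)
    (hv : DifferentiableAt ℝ v z) (i : Fin 2) :
    pd i (fun y => u y * v y) z = u z * pd i v z + v z * pd i u z := by
  unfold pd; rw [fderiv_fun_mul hu hv]; simp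

lemma pd_add {u v : Plane → ℝ} {z : Plane} (hu : DifferentiableAt ℝ u z)
    (hv : DifferentiableAt ℝ v z) (i : Fin 2) :
    pd i (fun y => u y + v y) z = pd i u z + pd i v z := by
  unfold pd; rw [fderiv_fun_add hu hv]; simp

lemma pd_const_mul {u : Plane → ℝ} {z : Plane} (hu : DifferentiableAt ℝ u z) (c : ℝ) (i : Fin 2) :
    pd i (fun y => c * u y) z = c * pd i u z := by
  unfold pd; rw [fderiv_const_mul hu]; simp

lemma lap_add {u v : Plane → ℝ} {z : Plane} (hu : ContDiffAt ℝ 2 u z) (hv : ContDiffAt ℝ 2 v z) :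
    lap (fun y => u y + v y) z = lap u z + lap v z := by
  have key (i : Fin 2) : pd i (pd i fun y => u y + v y) z = pd i (pd i u) z + pd i (pd i v) z := by
    have : pd i (fun y => u y + v y) =ᶠ[nhds z] fun y => pd i u y + pd i v y := by
      filter_upwards [eventually_differentiableAt hu, eventually_differentiableAt hv] with y h1 h2
      exact pd_add h1 h2 i
    rw [this.pd_eq, pd_add (pd_differentiableAt hu i) (pd_differentiableAt hv i)]
  simp only [lap_eq_pd, key]; ring

lemma lap_const_mul {u : Plane → ℝ} {z : Plane} (hu : ContDiffAt ℝ 2 u z) (c : ℝ) :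
    lap (fun y => c * u y) z = c * lap u z := by
  have key (i : Fin 2) : pd i (pd i fun y => c * u y) z = c * pd i (pd i u) z := by
    have : pd i (fun y => c * u y) =ᶠ[nhds z] fun y => c * pd i u y := by
      filter_upwards [eventually_differentiableAt hu] with y h1
      exact pd_const_mul h1 c i
    rw [this.pd_eq, pd_const_mul (pd_differentiableAt hu i)]
  simp only [lap_eq_pd, key]; ring

lemma lap_mul {u v : Plane → ℝ} {z : Plane} (hu : ContDiffAt ℝ 2 u z) (hv : ContDiffAt ℝ 2 v z) :
    lap (fun y => u y * v y) z = u z * lap v z + v z * lap u z + 2 * gdot u v z := by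
  have du := hu.differentiableAt (by norm_num : (2 : WithTop ℕ∞) ≠ 0)
  have dv := hv.differentiableAt (by norm_num : (2 : WithTop ℕ∞) ≠ 0)
  have key (i : Fin 2) : pd i (pd i fun y => u y * v y) z =
      u z * pd i (pd i v) z + v z * pd i (pd i u) z + 2 * (pd i u z * pd i v z) := by
    have : pd i (fun y => u y * v y) =ᶠ[nhds z] fun y => u y * pd i v y + v y * pd i u y := by
      filter_upwards [eventually_differentiableAt hu, eventually_differentiableAt hv] with y h1 h2
      exact pd_mul h1 h2 i
    rw [this.pd_eq, pd_add (u := fun y => u y * pd i v y) (v := fun y => v y * pd i u y)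
        (du.mul (pd_differentiableAt hv i)) (dv.mul (pd_differentiableAt hu i)),
      pd_mul du (pd_differentiableAt hv i), pd_mul dv (pd_differentiableAt hu i)]
    ring
  simp only [lap_eq_pd, key, gdot]; ring

lemma pd_comp {g : ℝ → ℝ} {u : Plane → ℝ} {z : Plane} (hg : DifferentiableAt ℝ g (u z))
    (hu : DifferentiableAt ℝ u z) (i : Fin 2) :
    pd i (fun y => g (u y)) z = deriv g (u z) * pd i u z := by
  unfold pd
  have := (hg.hasDerivAt.comp_hasFDerivAt z hu.hasFDerivAt).fderiv
  simp only [Function.comp_def] at this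
  rw [this]; simp

lemma gdot_comp {g : ℝ → ℝ} {φ u : Plane → ℝ} {z : Plane} (hg : DifferentiableAt ℝ g (u z))
    (hu : DifferentiableAt ℝ u z) :
    gdot φ (fun y => g (u y)) z = deriv g (u z) * gdot φ u z := by
  unfold gdot; rw [pd_comp hg hu, pd_comp hg hu]; ring

lemma lap_comp {g : ℝ → ℝ} {u : Plane → ℝ} {z : Plane} (hg : ContDiff ℝ 2 g)
    (hu : ContDiffAt ℝ 2 u z) :
    lap (fun y => g (u y)) z =
      deriv (deriv g) (u z) * gdot u u z + deriv g (u z) * lap u z := by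
  have du := hu.differentiableAt (by norm_num : (2 : WithTop ℕ∞) ≠ 0)
  have dg : Differentiable ℝ g := hg.differentiable (by norm_num)
  have dg' : Differentiable ℝ (deriv g) := by
    have : ContDiff ℝ (1 + 1) g := by simpa [one_add_one_eq_two] using hg
    exact (contDiff_succ_iff_deriv.1 this).2.2.differentiable (by norm_num)
  have key (i : Fin 2) : pd i (pd i fun y => g (u y)) z =
      deriv (deriv g) (u z) * (pd i u z * pd i u z) + deriv g (u z) * pd i (pd i u) z := by
    have : pd i (fun y => g (u y)) =ᶠ[nhds z] fun y => deriv g (u y) * pd i u y := by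
      filter_upwards [eventually_differentiableAt hu] with y h1
      exact pd_comp (dg _) h1 i
    rw [this.pd_eq, pd_mul (u := fun y => deriv g (u y)) ((dg' _).comp z du)
      (pd_differentiableAt hu i), pd_comp (dg' _) du]
    ring
  simp only [lap_eq_pd, key, gdot]; ring

lemma pd_comp_sub_left (u : Plane → ℝ) (c y : Plane) (i : Fin 2) :
    pd i (fun x => u (c - x)) y = - pd i u (c - y) := by
  have h : (fun x => u (c - x)) =
      (fun w => u (c + w)) ∘ (ContinuousLinearEquiv.neg ℝ : Plane ≃L[ℝ] Plane) := by
    funext x; simp [sub_eq_add_neg]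
  unfold pd; rw [h, ContinuousLinearEquiv.comp_right_fderiv, fderiv_comp_add_left]
  simp [sub_eq_add_neg]

lemma lap_comp_sub_left (u : Plane → ℝ) (c y : Plane) :
    lap (fun x => u (c - x)) y = lap u (c - y) := by
  have key (i : Fin 2) : pd i (pd i (fun x => u (c - x))) y = pd i (pd i u) (c - y) := by
    have h : pd i (fun x => u (c - x)) = fun x => (fun w => (-1 : ℝ) * pd i u w) (c - x) := by
      funext x; rw [pd_comp_sub_left]; ring
    rw [h, pd_comp_sub_left (fun w => (-1 : ℝ) * pd i u w)]
    unfold pd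
    have : (fun w => (-1 : ℝ) * (fderiv ℝ u w) (EuclideanSpace.single i 1)) =
      -(fun w => (fderiv ℝ u w) (EuclideanSpace.single i 1)) := by ext; simp
    rw [this, fderiv_neg]; simp
  simp only [lap_eq_pd, key]

/-- The logarithmic potential `-log |x|`, regularised at scale `δ`. -/
noncomputable def logPot (δ : ℝ) (x : Plane) : ℝ := -(1 / 2) * Real.log (‖x‖ ^ 2 + δ ^ 2)

lemma logPot_zero_left (x : Plane) : logPot 0 x = -Real.log ‖x‖ := by
  simp [logPot, Real.log_pow]

lemma normSq_add_pos_left {δ : ℝ} {x : Plane} (hx : x ≠ 0) : 0 < ‖x‖ ^ 2 + δ ^ 2 := by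
  have := norm_pos_iff.2 hx
  positivity

lemma normSq_add_pos_right {δ : ℝ} (hδ : δ ≠ 0) (x : Plane) : 0 < ‖x‖ ^ 2 + δ ^ 2 := by
  positivity

lemma logPot_contDiffAt {δ : ℝ} {x : Plane} (h : 0 < ‖x‖ ^ 2 + δ ^ 2) {n : WithTop ℕ∞} :
    ContDiffAt ℝ n (logPot δ) x := by
  unfold logPot
  exact contDiffAt_const.mul
    (((contDiff_norm_sq ℝ).contDiffAt.add contDiffAt_const).log h.ne')

lemma logPot_hasFDerivAt {δ : ℝ} {x : Plane} (h : 0 < ‖x‖ ^ 2 + δ ^ 2) :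
    HasFDerivAt (logPot δ) (-((‖x‖ ^ 2 + δ ^ 2)⁻¹ • innerSL ℝ x)) x := by
  have h1 := ((hasStrictFDerivAt_norm_sq x).hasFDerivAt.add_const (δ ^ 2)).log h.ne'
  have e : -((‖x‖ ^ 2 + δ ^ 2)⁻¹ • innerSL ℝ x) =
      (-(1 / 2) : ℝ) • ((‖x‖ ^ 2 + δ ^ 2)⁻¹ • (2 • innerSL ℝ x)) := by
    ext v; simp; ring
  rw [e]
  exact h1.const_mul (-(1 / 2))

lemma logPot_pd {δ : ℝ} {x : Plane} (h : 0 < ‖x‖ ^ 2 + δ ^ 2) (i : Fin 2) :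
    pd i (logPot δ) x = -(x i * (‖x‖ ^ 2 + δ ^ 2)⁻¹) := by
  unfold pd
  rw [(logPot_hasFDerivAt h).fderiv]
  simp [EuclideanSpace.inner_single_right]
  ring

lemma norm_fderiv_logPot {δ : ℝ} {x : Plane} (h : 0 < ‖x‖ ^ 2 + δ ^ 2) :
    ‖fderiv ℝ (logPot δ) x‖ = ‖x‖ / (‖x‖ ^ 2 + δ ^ 2) := by
  rw [(logPot_hasFDerivAt h).fderiv, norm_neg, norm_smul, innerSL_apply_norm, norm_inv,
    Real.norm_of_nonneg h.le]
  field_simp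

lemma norm_fderiv_logPot_le {δ : ℝ} {x : Plane} (hx : x ≠ 0) :
    ‖fderiv ℝ (logPot δ) x‖ ≤ 1 / ‖x‖ := by
  have := norm_pos_iff.2 hx
  rw [norm_fderiv_logPot (normSq_add_pos_left hx), div_le_div_iff₀ (by positivity) this]
  nlinarith [sq_nonneg δ]

lemma gdot_logPot_zero {x : Plane} (hx : x ≠ 0) :
    gdot (logPot 0) (logPot 0) x = 1 / ‖x‖ ^ 2 := by
  have h := norm_pos_iff.2 hx
  have h2 : ‖x‖ ^ 2 = x 0 ^ 2 + x 1 ^ 2 := by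
    simp [EuclideanSpace.norm_sq_eq]
  unfold gdot
  rw [logPot_pd (normSq_add_pos_left hx), logPot_pd (normSq_add_pos_left hx)]
  have h3 : 0 < ‖x‖ ^ 2 := by positivity
  rw [h2] at h3 ⊢
  field_simp
  ring

lemma logPot_lap {δ : ℝ} {x : Plane} (h : 0 < ‖x‖ ^ 2 + δ ^ 2) :
    lap (logPot δ) x = -(2 * δ ^ 2 / (‖x‖ ^ 2 + δ ^ 2) ^ 2) := by
  have key (i : Fin 2) : pd i (pd i (logPot δ)) x =
      2 * x i ^ 2 / (‖x‖ ^ 2 + δ ^ 2) ^ 2 - 1 / (‖x‖ ^ 2 + δ ^ 2) := by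
    have hev : ∀ᶠ y in nhds x, 0 < ‖y‖ ^ 2 + δ ^ 2 :=
      (by fun_prop : ContinuousAt (fun y : Plane => ‖y‖ ^ 2 + δ ^ 2) x).eventually (lt_mem_nhds h)
    have h1 : pd i (logPot δ) =ᶠ[nhds x]
        fun y : Plane => -((EuclideanSpace.proj i : Plane →L[ℝ] ℝ) y * (‖y‖ ^ 2 + δ ^ 2)⁻¹) :=
      hev.mono fun y hy => logPot_pd hy i
    rw [h1.pd_eq]
    have h2 := ((EuclideanSpace.proj i : Plane →L[ℝ] ℝ).hasFDerivAt (x := x)).mul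
      ((hasDerivAt_inv h.ne').comp_hasFDerivAt x
        ((hasStrictFDerivAt_norm_sq x).hasFDerivAt.add_const (δ ^ 2)))
    have h3 := h2.neg.fderiv
    unfold pd
    erw [h3]
    simp [EuclideanSpace.inner_single_right]
    field_simp
    ring
  have h2 : ‖x‖ ^ 2 = x 0 ^ 2 + x 1 ^ 2 := by
    simp [EuclideanSpace.norm_sq_eq]
  rw [lap_eq_pd, key, key]
  field_simp
  rw [h2]; ring

/-- The punctured disk of radius `R` about the origin. -/
def pdisk (R : ℝ) : Set Plane := {z | 0 < ‖z‖ ∧ ‖z‖ < R}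

lemma isOpen_pdisk (R : ℝ) : IsOpen (pdisk R) :=
  (isOpen_lt continuous_const continuous_norm).inter (isOpen_lt continuous_norm continuous_const)

lemma ae_ne_zero : ∀ᵐ y : Plane, y ≠ 0 := by
  simp [ae_iff]

lemma continuous_mul_of_tsupport_subset {U : Set Plane} (hU : IsOpen U) {w ψ : Plane → ℝ}
    (hw : ContinuousOn w U) (hψ : Continuous ψ) (hs : tsupport ψ ⊆ U) :
    Continuous fun y => ψ y * w y := by
  refine continuous_of_tsupport fun x hx => ?_
  have hx' : x ∈ tsupport ψ := closure_mono (Function.support_mul_subset_left ψ w) hx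
  exact hψ.continuousAt.mul (hw.continuousAt (hU.mem_nhds (hs hx')))

lemma integrable_mul_of_tsupport_subset {U : Set Plane} (hU : IsOpen U) {w ψ : Plane → ℝ}
    (hw : ContinuousOn w U) (hψ : Continuous ψ) (hc : HasCompactSupport ψ) (hs : tsupport ψ ⊆ U) :
    Integrable fun y => ψ y * w y :=
  (continuous_mul_of_tsupport_subset hU hw hψ hs).integrable_of_hasCompactSupport
    (hc.mul_right (f' := w))

lemma pd_continuousOn {U : Set Plane} (hU : IsOpen U) {v : Plane → ℝ} {n : WithTop ℕ∞}
    (hv : ContDiffOn ℝ n v U) (hn : 1 ≤ n) (i : Fin 2) : ContinuousOn (pd i v) U := fun x hx =>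
  (pd_contDiffAt (m := 0) (hv.contDiffAt (hU.mem_nhds hx)) (by simpa using hn)
    i).continuousAt.continuousWithinAt

lemma lap_continuousOn {U : Set Plane} (hU : IsOpen U) {v : Plane → ℝ}
    (hv : ContDiffOn ℝ 2 v U) : ContinuousOn (lap v) U := fun x hx =>
  (lap_contDiffAt (m := 0) (hv.contDiffAt (hU.mem_nhds hx))
    (by norm_num [one_add_one_eq_two])).continuousAt.continuousWithinAt

lemma tsupport_pd_subset (ψ : Plane → ℝ) (i : Fin 2) : tsupport (pd i ψ) ⊆ tsupport ψ := by
  refine (closure_mono ?_).trans (tsupport_fderiv_subset ℝ (f := ψ))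
  intro x hx
  contrapose! hx
  simp only [Function.mem_support, not_not] at hx
  simp [pd, hx]

/-- Green's identity for a compactly supported test function. -/
lemma integral_mul_lap_of_tsupport {U : Set Plane} (hU : IsOpen U) {v ψ : Plane → ℝ}
    (hv : ContDiffOn ℝ 2 v U) (hψ : ContDiff ℝ 2 ψ) (hc : HasCompactSupport ψ)
    (hs : tsupport ψ ⊆ U) :
    Integrable (fun y => v y * lap ψ y) ∧ Integrable (fun y => ψ y * lap v y) ∧
      ∫ y, v y * lap ψ y = ∫ y, ψ y * lap v y := by
  have hvU {x} (hx : x ∈ tsupport ψ) : ContDiffAt ℝ 2 v x := hv.contDiffAt (hU.mem_nhds (hs hx))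
  have hψc : ContDiffOn ℝ 2 ψ Set.univ := hψ.contDiffOn
  have cψ (i : Fin 2) : Continuous (pd i ψ) :=
    continuousOn_univ.1 (pd_continuousOn isOpen_univ hψc (by norm_num) i)
  have c2 {w : Plane → ℝ} {V : Set Plane} (hV : IsOpen V) (hw : ContDiffOn ℝ 2 w V) (i : Fin 2) :
      ContinuousOn (pd i (pd i w)) V :=
    pd_continuousOn hV (n := 1) (fun x hx => (pd_contDiffAt (hw.contDiffAt (hV.mem_nhds hx))
      (by norm_num [one_add_one_eq_two]) i).contDiffWithinAt) le_rfl i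
  have cψ2 (i : Fin 2) : Continuous (pd i (pd i ψ)) := continuousOn_univ.1 (c2 isOpen_univ hψc i)
  have ts (i : Fin 2) : tsupport (pd i ψ) ⊆ tsupport ψ := tsupport_pd_subset ψ i
  have ts2 (i : Fin 2) : tsupport (pd i (pd i ψ)) ⊆ tsupport ψ :=
    (tsupport_pd_subset _ i).trans (ts i)
  have sc {f : Plane → ℝ} (h : tsupport f ⊆ tsupport ψ) : HasCompactSupport f :=
    hc.of_isClosed_subset (isClosed_tsupport f) h
  have i1 (i : Fin 2) : Integrable fun y => v y * pd i (pd i ψ) y := by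
    simpa [mul_comm] using integrable_mul_of_tsupport_subset hU hv.continuousOn (cψ2 i)
      (sc (ts2 i)) ((ts2 i).trans hs)
  have i2 (i : Fin 2) : Integrable fun y => ψ y * pd i (pd i v) y :=
    integrable_mul_of_tsupport_subset hU (c2 hU hv i) hψ.continuous hc hs
  have i3 (i : Fin 2) : Integrable fun y => pd i ψ y * pd i v y :=
    integrable_mul_of_tsupport_subset hU (pd_continuousOn hU hv (by norm_num) i) (cψ i)
      (sc (ts i)) ((ts i).trans hs)
  have i4 (i : Fin 2) : Integrable fun y => ψ y * pd i v y :=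
    integrable_mul_of_tsupport_subset hU (pd_continuousOn hU hv (by norm_num) i) hψ.continuous hc hs
  have i5 (i : Fin 2) : Integrable fun y => v y * pd i ψ y := by
    simpa [mul_comm] using integrable_mul_of_tsupport_subset hU hv.continuousOn (cψ i)
      (sc (ts i)) ((ts i).trans hs)
  have key (i : Fin 2) : ∫ y, v y * pd i (pd i ψ) y = ∫ y, ψ y * pd i (pd i v) y := by
    have e1 : ∫ y, v y * pd i (pd i ψ) y = -∫ y, pd i v y * pd i ψ y :=
      integral_mul_fderiv_eq_neg_fderiv_mul_of_integrable (f := v) (g := pd i ψ)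
        (by simpa [mul_comm, pd] using i3 i) (i1 i) (i5 i)
        (fun x hx => (hvU (ts i hx)).differentiableAt (by norm_num))
        (fun x _ => pd_differentiableAt hψ.contDiffAt i)
    have e2 : ∫ y, ψ y * pd i (pd i v) y = -∫ y, pd i ψ y * pd i v y :=
      integral_mul_fderiv_eq_neg_fderiv_mul_of_integrable (f := ψ) (g := pd i v)
        (i3 i) (i2 i) (i4 i)
        (fun x _ => hψ.contDiffAt.differentiableAt (by norm_num))
        (fun x hx => pd_differentiableAt (hvU hx) i)
    rw [e1, e2]; simp [mul_comm]
  simp only [lap_eq_pd, mul_add]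
  refine ⟨(i1 0).add (i1 1), (i2 0).add (i2 1), ?_⟩
  rw [integral_add (i1 0) (i1 1), integral_add (i2 0) (i2 1), key, key]

/-- Green's identity for a test function that vanishes near the origin, away from the origin
itself. -/
lemma integral_mul_lap_of_punctured {R ρ ε : ℝ} {v ψ : Plane → ℝ} (hv : ContDiffOn ℝ 2 v (pdisk R))
    (hψ : ContDiffOn ℝ 2 ψ {0}ᶜ) (hε : 0 < ε) (h1 : ∀ y, 0 < ‖y‖ → ‖y‖ < ε → ψ y = 0)
    (hρ : ρ < R) (h2 : ∀ y, ρ < ‖y‖ → ψ y = 0) :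
    Integrable (fun y => v y * lap ψ y) ∧ Integrable (fun y => ψ y * lap v y) ∧
      ∫ y, v y * lap ψ y = ∫ y, ψ y * lap v y := by
  have hzero : ∀ y : Plane, ‖y‖ < ε → ({0}ᶜ : Set Plane).indicator ψ y = 0 := by
    intro y hy
    by_cases h0 : y = 0
    · simp [h0]
    · rw [Set.indicator_of_mem (by simpa using h0), h1 y (norm_pos_iff.2 h0) hy]
  have hev : ∀ y : Plane, y ≠ 0 → ({0}ᶜ : Set Plane).indicator ψ =ᶠ[nhds y] ψ := fun y hy =>
    (isOpen_compl_singleton.mem_nhds hy : ({0}ᶜ : Set Plane) ∈ nhds y) |> fun h => by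
      filter_upwards [h] with x hx using Set.indicator_of_mem hx _
  have hsub : tsupport (({0}ᶜ : Set Plane).indicator ψ) ⊆ {y | ε ≤ ‖y‖ ∧ ‖y‖ ≤ ρ} := by
    refine closure_minimal ?_ ((isClosed_le continuous_const continuous_norm).inter
      (isClosed_le continuous_norm continuous_const))
    intro y hy
    by_contra hcon
    apply hy
    by_cases h3 : ‖y‖ < ε
    · exact hzero y h3
    · have h4 : ρ < ‖y‖ := by
        by_contra h5
        exact hcon ⟨not_lt.1 h3, not_lt.1 h5⟩
      by_cases h0 : y = 0
      · simp [h0]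
      · rw [Set.indicator_of_mem (by simpa using h0), h2 y h4]
  have key := integral_mul_lap_of_tsupport (isOpen_pdisk R) hv
    (ψ := ({0}ᶜ : Set Plane).indicator ψ) ?_ ?_ ?_
  · have a1 : ∀ᵐ y : Plane, v y * lap ψ y = v y * lap (({0}ᶜ : Set Plane).indicator ψ) y := by
      filter_upwards [ae_ne_zero] with y hy
      rw [(hev y hy).lap_eq]
    have a2 : ∀ᵐ y : Plane, ψ y * lap v y = ({0}ᶜ : Set Plane).indicator ψ y * lap v y := by
      filter_upwards [ae_ne_zero] with y hy
      rw [(hev y hy).eq_of_nhds]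
    refine ⟨key.1.congr (a1.mono fun _ h => h.symm), key.2.1.congr (a2.mono fun _ h => h.symm), ?_⟩
    rw [integral_congr_ae a1, integral_congr_ae a2, key.2.2]
  · rw [contDiff_iff_contDiffAt]
    intro y
    by_cases h0 : y = 0
    · subst h0
      refine (contDiffAt_const (c := (0 : ℝ))).congr_of_eventuallyEq ?_
      filter_upwards [ball_mem_nhds (0 : Plane) hε] with x hx
      exact hzero x (by simpa using hx)
    · exact (hψ.contDiffAt (isOpen_compl_singleton.mem_nhds h0)).congr_of_eventuallyEq (hev y h0)
  · refine (isCompact_closedBall (0 : Plane) ρ).of_isClosed_subset (isClosed_tsupport _) ?_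
    intro y hy
    simpa using (hsub hy).2
  · intro y hy
    exact ⟨hε.trans_le (hsub hy).1, (hsub hy).2.trans_lt hρ⟩

lemma integrableOn_norm_rpow {p : ℝ} (hp : -2 < p) (r : ℝ) :
    IntegrableOn (fun x : Plane => ‖x‖ ^ p) (ball 0 r) := by
  have h := (integrable_fun_norm_addHaar (volume : Measure Plane)
    (f := (Set.Iio r).indicator fun t => t ^ p)).2 ?_
  · rw [← integrable_indicator_iff measurableSet_ball]
    refine h.congr (ae_of_all _ fun x => ?_)
    by_cases hx : ‖x‖ < r <;> simp [Set.indicator, hx]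
  · simp only [finrank_euclideanSpace, Fintype.card_fin]
    have : IntegrableOn (fun t : ℝ => t ^ (p + 1)) (Set.Ioo 0 r) := by
      rcases le_or_gt r 0 with h | h
      · simp [Set.Ioo_eq_empty_of_le h]
      · exact (intervalIntegral.integrableOn_Ioo_rpow_iff h).2 (by linarith)
    rw [← integrable_indicator_iff measurableSet_Ioo] at this
    rw [← integrable_indicator_iff measurableSet_Ioi]
    refine this.congr (ae_of_all _ fun t => ?_)
    by_cases h0 : 0 < t <;> by_cases h1 : t < r <;>
      simp [Set.indicator, h0, h1, Real.rpow_add, mul_comm]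

lemma hasDerivAt_max_pow (n : ℕ) (t : ℝ) :
    HasDerivAt (fun t : ℝ => max t 0 ^ (n + 2)) ((n + 2) * max t 0 ^ (n + 1)) t := by
  rcases lt_trichotomy t 0 with h | h | h
  · have : (fun t : ℝ => max t 0 ^ (n + 2)) =ᶠ[nhds t] fun _ => 0 := by
      filter_upwards [gt_mem_nhds h] with s hs
      simp [max_eq_right hs.le]
    rw [max_eq_right h.le]
    simpa using (hasDerivAt_const t (0 : ℝ)).congr_of_eventuallyEq this
  · subst h
    rw [hasDerivAt_iff_isLittleO]
    simp only [max_self, sub_zero, smul_eq_mul, ne_eq, Nat.add_eq_zero_iff, OfNat.ofNat_ne_zero,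
      one_ne_zero, and_false, not_false_eq_true, zero_pow, mul_zero]
    have h1 : (fun t : ℝ => max t 0 ^ (n + 2)) =O[nhds 0] fun t : ℝ => t ^ (n + 2) := by
      refine Asymptotics.IsBigO.of_bound 1 (Eventually.of_forall fun s => ?_)
      simp only [norm_pow, one_mul, Real.norm_eq_abs]
      refine pow_le_pow_left₀ (abs_nonneg _) ?_ _
      rcases le_total s 0 with h | h <;> simp [h]
    refine h1.trans_isLittleO ?_
    simpa using Asymptotics.isLittleO_pow_pow (𝕜 := ℝ) (show 1 < n + 2 by omega)
  · have : (fun t : ℝ => max t 0 ^ (n + 2)) =ᶠ[nhds t] fun t => t ^ (n + 2) := by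
      filter_upwards [lt_mem_nhds h] with s hs
      simp [max_eq_left hs.le]
    rw [max_eq_left h.le]
    simpa using (hasDerivAt_pow (n + 2) t).congr_of_eventuallyEq this

/-- The convex cut-off `t ↦ t₊³` evaluated at `1 - s / T`. -/
noncomputable def cutoff (T s : ℝ) : ℝ := max (1 - s / T) 0 ^ 3

lemma hasDerivAt_max_sub_pow (n : ℕ) (T s : ℝ) :
    HasDerivAt (fun s : ℝ => max (1 - s / T) 0 ^ (n + 2))
      (-((n + 2) / T * max (1 - s / T) 0 ^ (n + 1))) s := by
  have h : HasDerivAt (fun s : ℝ => 1 - s / T) (-(1 / T)) s :=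
    ((hasDerivAt_id s).div_const T).const_sub 1
  refine ((hasDerivAt_max_pow n (1 - s / T)).comp s h).congr_deriv ?_
  ring

lemma deriv_cutoff (T : ℝ) : deriv (cutoff T) = fun s => -(3 / T) * max (1 - s / T) 0 ^ 2 := by
  funext s
  refine (hasDerivAt_max_sub_pow 1 T s).deriv.trans ?_
  norm_num

lemma deriv_deriv_cutoff (T : ℝ) :
    deriv (deriv (cutoff T)) = fun s => 6 / T ^ 2 * max (1 - s / T) 0 := by
  funext s
  rw [deriv_cutoff]
  have := ((hasDerivAt_max_sub_pow 0 T s).const_mul (-(3 / T))).deriv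
  refine this.trans ?_
  norm_num
  ring

lemma cutoff_differentiable (T : ℝ) : Differentiable ℝ (cutoff T) := fun s =>
  (hasDerivAt_max_sub_pow 1 T s).differentiableAt

lemma deriv_cutoff_differentiable (T : ℝ) : Differentiable ℝ (deriv (cutoff T)) := by
  rw [deriv_cutoff]
  exact fun s => ((hasDerivAt_max_sub_pow 0 T s).const_mul (-(3 / T))).differentiableAt

lemma contDiff_two_of_deriv {g : ℝ → ℝ} (h1 : Differentiable ℝ g) (h2 : Differentiable ℝ (deriv g))
    (h3 : Continuous (deriv (deriv g))) : ContDiff ℝ 2 g := by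
  rw [show (2 : WithTop ℕ∞) = 1 + 1 from one_add_one_eq_two.symm, contDiff_succ_iff_deriv]
  refine ⟨h1, by simp, ?_⟩
  rw [show (1 : WithTop ℕ∞) = 0 + 1 by simp, contDiff_succ_iff_deriv]
  exact ⟨h2, by simp, contDiff_zero.2 h3⟩

lemma cutoff_contDiff (T : ℝ) : ContDiff ℝ 2 (cutoff T) := by
  refine contDiff_two_of_deriv (cutoff_differentiable T) (deriv_cutoff_differentiable T) ?_
  rw [deriv_deriv_cutoff]; fun_prop

lemma cutoff_eq_zero {T s : ℝ} (hT : 0 < T) (hs : T ≤ s) : cutoff T s = 0 := by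
  have : 1 ≤ s / T := (one_le_div hT).2 hs
  simp [cutoff, max_eq_right (show 1 - s / T ≤ 0 by linarith)]

lemma max_sub_div_le_one {T s : ℝ} (hT : 0 < T) (hs : 0 ≤ s) : max (1 - s / T) 0 ≤ 1 := by
  have : 0 ≤ s / T := by positivity
  simp [this]

lemma cutoff_mem_Icc {T s : ℝ} (hT : 0 < T) (hs : 0 ≤ s) : cutoff T s ∈ Set.Icc (0 : ℝ) 1 :=
  ⟨by unfold cutoff; positivity, pow_le_one₀ (by positivity) (max_sub_div_le_one hT hs)⟩

lemma abs_deriv_cutoff_le {T s : ℝ} (hT : 0 < T) (hs : 0 ≤ s) :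
    |deriv (cutoff T) s| ≤ 3 / T := by
  rw [deriv_cutoff]
  simp only [abs_mul, abs_neg]
  rw [abs_of_pos (by positivity), abs_of_nonneg (by positivity)]
  exact mul_le_of_le_one_right (by positivity)
    (pow_le_one₀ (by positivity) (max_sub_div_le_one hT hs))

lemma deriv_deriv_cutoff_mem_Icc {T s : ℝ} (hT : 0 < T) (hs : 0 ≤ s) :
    deriv (deriv (cutoff T)) s ∈ Set.Icc (0 : ℝ) (6 / T ^ 2) := by
  rw [deriv_deriv_cutoff]
  exact ⟨by positivity, mul_le_of_le_one_right (by positivity) (max_sub_div_le_one hT hs)⟩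

lemma tendsto_cutoff (s : ℝ) : Tendsto (fun T => cutoff T s) atTop (nhds 1) := by
  have h : Tendsto (fun T : ℝ => max (1 - s / T) 0 ^ 3) atTop (nhds (max (1 - 0) 0 ^ 3)) :=
    ((tendsto_const_nhds.sub (tendsto_const_nhds.div_atTop tendsto_id)).max
      tendsto_const_nhds).pow 3
  simpa [cutoff] using h

/-- The product of the cut-off with `1 + e^{-s}`, whose convexity controls both the mass of the
Laplacian and the growth of a positive superharmonic function. -/
noncomputable def expCutoff (T s : ℝ) : ℝ := cutoff T s * (1 + Real.exp (-s))

lemma hasDerivAt_one_add_exp_neg (s : ℝ) :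
    HasDerivAt (fun s => 1 + Real.exp (-s)) (-Real.exp (-s)) s := by
  simpa using ((hasDerivAt_neg s).exp).const_add 1

lemma deriv_expCutoff (T : ℝ) : deriv (expCutoff T) = fun s =>
    deriv (cutoff T) s * (1 + Real.exp (-s)) + cutoff T s * -Real.exp (-s) := by
  funext s
  exact ((cutoff_differentiable T s).hasDerivAt.mul (hasDerivAt_one_add_exp_neg s)).deriv

lemma deriv_deriv_expCutoff (T : ℝ) : deriv (deriv (expCutoff T)) = fun s =>
    deriv (deriv (cutoff T)) s * (1 + Real.exp (-s)) + 2 * (deriv (cutoff T) s * -Real.exp (-s))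
      + cutoff T s * Real.exp (-s) := by
  funext s
  rw [deriv_expCutoff]
  have h1 : HasDerivAt (fun s => -Real.exp (-s)) (Real.exp (-s)) s := by
    simpa using ((hasDerivAt_neg s).exp).fun_neg
  refine (((deriv_cutoff_differentiable T s).hasDerivAt.mul (hasDerivAt_one_add_exp_neg s)).add
    ((cutoff_differentiable T s).hasDerivAt.mul h1)).deriv.trans ?_
  ring

lemma expCutoff_contDiff (T : ℝ) : ContDiff ℝ 2 (expCutoff T) := by
  unfold expCutoff
  exact (cutoff_contDiff T).mul (contDiff_const.add (Real.contDiff_exp.comp contDiff_neg))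

lemma cutoff_mul_exp_le_deriv_deriv_expCutoff {T s : ℝ} (hT : 0 < T) (hs : 0 ≤ s) :
    cutoff T s * Real.exp (-s) ≤ deriv (deriv (expCutoff T)) s := by
  rw [deriv_deriv_expCutoff]
  have h1 := (deriv_deriv_cutoff_mem_Icc hT hs).1
  have h2 : deriv (cutoff T) s ≤ 0 := by
    rw [deriv_cutoff]
    have : 0 ≤ 3 / T * max (1 - s / T) 0 ^ 2 := by positivity
    linarith
  have h3 := Real.exp_pos (-s)
  nlinarith [mul_nonneg h1 h3.le, mul_nonneg (neg_nonneg.2 h2) h3.le]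

lemma expCutoff_mem_Icc {T s : ℝ} (hT : 0 < T) (hs : 0 ≤ s) :
    expCutoff T s ∈ Set.Icc (cutoff T s) 2 := by
  obtain ⟨h1, h2⟩ := cutoff_mem_Icc hT hs
  have h3 := Real.exp_pos (-s)
  have h4 : Real.exp (-s) ≤ 1 := Real.exp_le_one_iff.2 (by linarith)
  constructor <;> unfold expCutoff <;> nlinarith

lemma abs_deriv_expCutoff_le {T s : ℝ} (hT : 1 ≤ T) (hs : 0 ≤ s) :
    |deriv (expCutoff T) s| ≤ 7 := by
  have hT0 : 0 < T := by linarith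
  obtain ⟨h1, h2⟩ := cutoff_mem_Icc hT0 hs
  have h3 := Real.exp_pos (-s)
  have h4 : Real.exp (-s) ≤ 1 := Real.exp_le_one_iff.2 (by linarith)
  have h5 := (abs_deriv_cutoff_le hT0 hs).trans (div_le_self (by norm_num) hT)
  rw [deriv_expCutoff]
  rw [abs_le] at h5 ⊢
  constructor <;> nlinarith

lemma logPot_zero_nonneg {y : Plane} (hy : ‖y‖ ≤ 1) : 0 ≤ logPot 0 y := by
  rw [logPot_zero_left]
  have := Real.log_nonpos (norm_nonneg y) hy
  linarith

lemma exp_neg_logPot_zero {y : Plane} (hy : y ≠ 0) : Real.exp (-logPot 0 y) = ‖y‖ := by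
  rw [logPot_zero_left, neg_neg, Real.exp_log (norm_pos_iff.2 hy)]

lemma le_logPot_zero {y : Plane} (hy : y ≠ 0) {T : ℝ} (h : ‖y‖ ≤ Real.exp (-T)) :
    T ≤ logPot 0 y := by
  rw [logPot_zero_left]
  have := (Real.log_le_iff_le_exp (norm_pos_iff.2 hy)).2 h
  linarith

lemma logPot_zero_le {y : Plane} (hy : y ≠ 0) {T : ℝ} (h : Real.exp (-T) ≤ ‖y‖) :
    logPot 0 y ≤ T := by
  rw [logPot_zero_left]
  have := (Real.le_log_iff_exp_le (norm_pos_iff.2 hy)).2 h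
  linarith

lemma lap_mul_comp_logPot {φ : Plane → ℝ} {g : ℝ → ℝ} {y : Plane} (hφ : ContDiff ℝ 2 φ)
    (hg : ContDiff ℝ 2 g) (hy : y ≠ 0) :
    lap (fun x => φ x * g (logPot 0 x)) y =
      φ y * (deriv (deriv g) (logPot 0 y) / ‖y‖ ^ 2) +
        (g (logPot 0 y) * lap φ y + 2 * (deriv g (logPot 0 y) * gdot φ (logPot 0) y)) := by
  have hL : ContDiffAt ℝ 2 (logPot 0) y := logPot_contDiffAt (normSq_add_pos_left hy)
  have h1 : lap (logPot 0) y = 0 := by rw [logPot_lap (normSq_add_pos_left hy)]; simp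
  rw [lap_mul (v := fun x => g (logPot 0 x)) hφ.contDiffAt (hg.contDiffAt.comp y hL),
    lap_comp hg hL, gdot_logPot_zero hy, h1,
    gdot_comp (hg.differentiable (by norm_num) _) (hL.differentiableAt (by norm_num))]
  ring

lemma abs_gdot_logPot_le (φ : Plane → ℝ) {δ : ℝ} {y : Plane} (hy : y ≠ 0) :
    |gdot φ (logPot δ) y| ≤ 2 * ‖fderiv ℝ φ y‖ / ‖y‖ := by
  refine (abs_gdot_le _ _ _).trans ?_
  have := mul_le_mul_of_nonneg_left (norm_fderiv_logPot_le (δ := δ) hy) (norm_nonneg (fderiv ℝ φ y))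
  calc _ ≤ 2 * (‖fderiv ℝ φ y‖ * (1 / ‖y‖)) := by gcongr
    _ = _ := by ring

lemma exists_bound_of_contDiff {φ : Plane → ℝ} (hφ : ContDiff ℝ 2 φ) (ρ : ℝ) :
    ∃ c : ℝ, 0 ≤ c ∧ ∀ y, ‖y‖ ≤ ρ → |φ y| ≤ c ∧ |lap φ y| ≤ c ∧ ‖fderiv ℝ φ y‖ ≤ c := by
  have hK := isCompact_closedBall (0 : Plane) ρ
  obtain ⟨c1, h1⟩ := hK.exists_bound_of_continuousOn hφ.continuous.continuousOn
  obtain ⟨c2, h2⟩ := hK.exists_bound_of_continuousOn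
    ((lap_continuousOn isOpen_univ hφ.contDiffOn).mono (Set.subset_univ _))
  obtain ⟨c3, h3⟩ := hK.exists_bound_of_continuousOn
    (hφ.continuous_fderiv (by norm_num)).continuousOn
  refine ⟨max 0 (max c1 (max c2 c3)), le_max_left _ _, fun y hy => ?_⟩
  have hy' : y ∈ closedBall (0 : Plane) ρ := by simpa using hy
  refine ⟨(h1 y hy').trans ?_, (h2 y hy').trans ?_, (h3 y hy').trans ?_⟩ <;> simp

lemma mul_comp_logPot_contDiffOn {φ : Plane → ℝ} {g : ℝ → ℝ} (hφ : ContDiff ℝ 2 φ)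
    (hg : ContDiff ℝ 2 g) : ContDiffOn ℝ 2 (fun x => φ x * g (logPot 0 x)) {0}ᶜ := fun y hy =>
  (hφ.contDiffAt.mul (hg.contDiffAt.comp y
    (logPot_contDiffAt (normSq_add_pos_left (by simpa using hy))))).contDiffWithinAt

lemma continuousOn_annulus_bound {R a b : ℝ} {w : Plane → ℝ} (hw : ContinuousOn w (pdisk R))
    (ha : 0 < a) (hb : b < R) : ∃ V : ℝ, 0 ≤ V ∧ ∀ y, a ≤ ‖y‖ → ‖y‖ ≤ b → |w y| ≤ V := by
  have hK : IsCompact {y : Plane | a ≤ ‖y‖ ∧ ‖y‖ ≤ b} :=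
    (isCompact_closedBall (0 : Plane) b).of_isClosed_subset
      ((isClosed_le continuous_const continuous_norm).inter
        (isClosed_le continuous_norm continuous_const)) fun y hy => by simpa using hy.2
  obtain ⟨V, hV⟩ := hK.exists_bound_of_continuousOn
    (hw.mono fun y hy => ⟨ha.trans_le hy.1, hy.2.trans_lt hb⟩)
  exact ⟨max V 0, le_max_right _ _, fun y h1 h2 => (hV y ⟨h1, h2⟩).trans (le_max_left _ _)⟩

/-- A positive superharmonic function on a punctured disk has integrable Laplacian near the
puncture, and `v / |y|` is integrable there. -/
lemma integrableOn_of_superharmonic {R ρ : ℝ} {v : Plane → ℝ} (hv : ContDiffOn ℝ 2 v (pdisk R))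
    (hv0 : ∀ z ∈ pdisk R, 0 ≤ v z) (hf : ∀ z ∈ pdisk R, 0 ≤ -lap v z) (hρ0 : 0 < ρ)
    (hρR : ρ < R) (hρ1 : ρ < 1) :
    IntegrableOn (fun y => v y / ‖y‖ + -lap v y) (ball 0 ρ) := by
  obtain ⟨ρ', hρ', hρ'2⟩ := exists_between (lt_min hρR hρ1)
  obtain ⟨hρ'R, hρ'1⟩ := lt_min_iff.1 hρ'2
  let χ : ContDiffBump (0 : Plane) := ⟨ρ, ρ', hρ0, hρ'⟩
  have hχ : ContDiff ℝ 2 χ := χ.contDiff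
  obtain ⟨c, hc0, hc⟩ := exists_bound_of_contDiff hχ ρ'
  obtain ⟨V, hV0, hV⟩ := continuousOn_annulus_bound hv.continuousOn hρ0 hρ'R
  let B : ℝ := V * (2 * c + 2 * (7 * (2 * c / ρ)))
  have hB : 0 ≤ B := by positivity
  have main : ∀ n : ℕ, IntegrableOn (fun y => v y / ‖y‖ + -lap v y)
        ({y | Real.exp (-((n + 1) / 2)) ≤ ‖y‖} ∩ ball 0 ρ) ∧
      ∫ y in {y | Real.exp (-((n + 1) / 2)) ≤ ‖y‖} ∩ ball 0 ρ, (v y / ‖y‖ + -lap v y) ≤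
        8 * (B * volume.real (closedBall (0 : Plane) ρ')) := by
    intro n
    set T : ℝ := n + 1 with hT
    have hT1 : 1 ≤ T := by rw [hT]; linarith [Nat.cast_nonneg (α := ℝ) n]
    have hT0 : 0 < T := by linarith
    let ψ : Plane → ℝ := fun x => χ x * expCutoff T (logPot 0 x)
    obtain ⟨I1, I2, I3⟩ := integral_mul_lap_of_punctured (ψ := ψ) (ε := Real.exp (-T)) (ρ := ρ') hv
      (mul_comp_logPot_contDiffOn hχ (expCutoff_contDiff T)) (Real.exp_pos _)
      (fun y h1 h2 => by
        have := le_logPot_zero (norm_pos_iff.1 h1) h2.le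
        simp [ψ, expCutoff, cutoff_eq_zero hT0 this]) hρ'R
      (fun y h => by
        have : χ y = 0 := χ.zero_of_le_dist (by simpa [χ] using h.le)
        simp [ψ, this])
    have I4 : Integrable ((closedBall (0 : Plane) ρ').indicator fun _ => B) := by
      rw [integrable_indicator_iff measurableSet_closedBall]
      exact integrableOn_const measure_closedBall_lt_top.ne
    let G : Plane → ℝ := fun y => (v y * lap ψ y - ψ y * lap v y) +
      (closedBall (0 : Plane) ρ').indicator (fun _ => B) y
    have IG : Integrable G := (I1.sub I2).add I4
    have hGint : ∫ y, G y = B * volume.real (closedBall (0 : Plane) ρ') := by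
      simp only [G]
      rw [integral_add (f := fun y => v y * lap ψ y - ψ y * lap v y) (I1.sub I2) I4,
        integral_sub I1 I2, I3, sub_self, zero_add,
        integral_indicator measurableSet_closedBall, setIntegral_const, smul_eq_mul, mul_comm]
    have hG : ∀ y : Plane, y ≠ 0 → ‖y‖ ≤ ρ' →
        χ y * (cutoff T (logPot 0 y)) * (v y / ‖y‖ + -lap v y) ≤ G y := by
      intro y hy hyρ
      have hy0 := norm_pos_iff.2 hy
      have hyR : y ∈ pdisk R := ⟨hy0, hyρ.trans_lt hρ'R⟩
      have hL : 0 ≤ logPot 0 y := logPot_zero_nonneg (hyρ.trans hρ'1.le)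
      have hE : |v y * (expCutoff T (logPot 0 y) * lap χ y +
          2 * (deriv (expCutoff T) (logPot 0 y) * gdot χ (logPot 0) y))| ≤ B := by
        rcases lt_or_ge ‖y‖ ρ with h | h
        · have h1 : (χ : Plane → ℝ) =ᶠ[nhds y] fun _ => 1 :=
            χ.eventuallyEq_one_of_mem_ball (by simpa [χ] using h)
          rw [h1.lap_eq, h1.gdot_eq]
          simpa [lap, gdot, pd] using hB
        · obtain ⟨_, h2, h3⟩ := hc y hyρ
          obtain ⟨e1, e2⟩ := expCutoff_mem_Icc hT0 hL
          have e0 := (cutoff_mem_Icc hT0 hL).1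
          rw [abs_mul]
          refine mul_le_mul (hV y h hyρ) ?_ (abs_nonneg _) hV0
          refine (abs_add_le _ _).trans (add_le_add ?_ ?_)
          · rw [abs_mul, abs_of_nonneg (e0.trans e1)]
            gcongr
          · rw [abs_mul, abs_mul, abs_of_pos (by norm_num : (0 : ℝ) < 2)]
            gcongr
            · exact abs_deriv_expCutoff_le hT1 hL
            · refine (abs_gdot_logPot_le _ hy).trans ?_
              gcongr
      have hind : (closedBall (0 : Plane) ρ').indicator (fun _ => B) y = B :=
        Set.indicator_of_mem (by simpa using hyρ) _
      simp only [G, hind, ψ]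
      rw [lap_mul_comp_logPot hχ (expCutoff_contDiff T) hy]
      have h1 := cutoff_mul_exp_le_deriv_deriv_expCutoff hT0 hL
      rw [exp_neg_logPot_zero hy] at h1
      have h2 : cutoff T (logPot 0 y) / ‖y‖ ≤
          deriv (deriv (expCutoff T)) (logPot 0 y) / ‖y‖ ^ 2 := by
        rw [div_le_div_iff₀ hy0 (by positivity)]
        nlinarith
      have h3 := (expCutoff_mem_Icc hT0 hL).1
      have hχ0 : 0 ≤ χ y := χ.nonneg
      have h4 := mul_le_mul_of_nonneg_left h2 (mul_nonneg hχ0 (hv0 y hyR))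
      have h5 := mul_le_mul_of_nonneg_left h3 (mul_nonneg hχ0 (hf y hyR))
      have h6 := (abs_le.1 hE).1
      have h7 : χ y * cutoff T (logPot 0 y) * (v y / ‖y‖ + -lap v y) =
        χ y * v y * (cutoff T (logPot 0 y) / ‖y‖) + χ y * -lap v y * cutoff T (logPot 0 y) := by
        ring
      rw [h7]
      linarith
    have hG0 : ∀ᵐ y, 0 ≤ G y := by
      filter_upwards [ae_ne_zero] with y hy
      rcases le_or_gt ‖y‖ ρ' with h | h
      · refine le_trans ?_ (hG y hy h)
        have hyR : y ∈ pdisk R := ⟨norm_pos_iff.2 hy, h.trans_lt hρ'R⟩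
        have e0 := (cutoff_mem_Icc hT0 (logPot_zero_nonneg (h.trans hρ'1.le))).1
        have := hv0 y hyR
        have := hf y hyR
        have := χ.nonneg (x := y)
        positivity
      · have hz : ψ =ᶠ[nhds y] fun _ => 0 := by
          filter_upwards [(isOpen_lt continuous_const continuous_norm).mem_nhds h] with x hx
          have : χ x = 0 := χ.zero_of_le_dist (by simpa [χ] using (le_of_lt hx))
          simp [ψ, this]
        simp only [G]
        rw [hz.lap_eq, hz.eq_of_nhds, Set.indicator_of_notMem (by simpa using h)]
        simp [lap]
    have hle : ∀ y ∈ {y : Plane | Real.exp (-(T / 2)) ≤ ‖y‖} ∩ ball 0 ρ,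
        0 ≤ v y / ‖y‖ + -lap v y ∧ v y / ‖y‖ + -lap v y ≤ 8 * G y := by
      rintro y ⟨hy1, hy2⟩
      have hy0 : 0 < ‖y‖ := (Real.exp_pos _).trans_le hy1
      have hyρ : ‖y‖ < ρ := by simpa using hy2
      have hy := norm_pos_iff.1 hy0
      have hyR : y ∈ pdisk R := ⟨hy0, hyρ.trans hρR⟩
      have hχ1 : χ y = 1 := χ.one_of_mem_closedBall (by simpa [χ] using hyρ.le)
      have hcut : 1 / 8 ≤ cutoff T (logPot 0 y) := by
        have h1 := logPot_zero_le hy hy1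
        have h2 : logPot 0 y / T ≤ 1 / 2 := by
          rw [div_le_iff₀ hT0]; linarith
        have h3 : 1 / 2 ≤ max (1 - logPot 0 y / T) 0 := le_max_of_le_left (by linarith)
        calc (1 / 8 : ℝ) = (1 / 2) ^ 3 := by norm_num
          _ ≤ _ := by unfold cutoff; gcongr
      have h0 : 0 ≤ v y / ‖y‖ + -lap v y :=
        add_nonneg (div_nonneg (hv0 y hyR) hy0.le) (hf y hyR)
      have := hG y hy (hyρ.trans hρ').le
      rw [hχ1, one_mul] at this
      exact ⟨h0, by nlinarith [mul_le_mul_of_nonneg_right hcut h0]⟩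
    have hms : MeasurableSet ({y : Plane | Real.exp (-(T / 2)) ≤ ‖y‖} ∩ ball 0 ρ) :=
      (measurableSet_le measurable_const measurable_norm).inter measurableSet_ball
    have hmeas : AEStronglyMeasurable (fun y => v y / ‖y‖ + -lap v y)
        (volume.restrict ({y : Plane | Real.exp (-(T / 2)) ≤ ‖y‖} ∩ ball 0 ρ)) := by
      refine ContinuousOn.aestronglyMeasurable ?_ hms
      have hsub : {y : Plane | Real.exp (-(T / 2)) ≤ ‖y‖} ∩ ball 0 ρ ⊆ pdisk R := fun y hy =>
        ⟨(Real.exp_pos _).trans_le hy.1, (by simpa using hy.2 : ‖y‖ < ρ).trans hρR⟩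
      exact ((hv.continuousOn.mono hsub).div continuousOn_id.norm
        (fun y hy => (hsub hy).1.ne')).add ((lap_continuousOn (isOpen_pdisk R) hv).mono hsub).neg
    have hsum : IntegrableOn (fun y => v y / ‖y‖ + -lap v y)
        ({y : Plane | Real.exp (-(T / 2)) ≤ ‖y‖} ∩ ball 0 ρ) := by
      refine (IG.const_mul 8).integrableOn.mono' hmeas ?_
      filter_upwards [ae_restrict_mem hms] with y hy
      rw [Real.norm_of_nonneg (hle y hy).1]
      exact (hle y hy).2
    refine ⟨hsum, ?_⟩
    calc _ ≤ ∫ y in {y : Plane | Real.exp (-(T / 2)) ≤ ‖y‖} ∩ ball 0 ρ, 8 * G y :=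
          setIntegral_mono_on hsum (IG.const_mul 8).integrableOn hms fun y hy => (hle y hy).2
      _ ≤ ∫ y, 8 * G y := setIntegral_le_integral (IG.const_mul 8)
          (hG0.mono fun y hy => by simpa using hy)
      _ = _ := by rw [integral_const_mul, hGint]
  have cover : AECover (volume.restrict (ball (0 : Plane) ρ)) atTop
      fun n : ℕ => {y : Plane | Real.exp (-((n + 1) / 2)) ≤ ‖y‖} := by
    refine ⟨ae_restrict_of_ae ?_, fun n => measurableSet_le measurable_const measurable_norm⟩
    filter_upwards [ae_ne_zero] with y hy
    have h1 : Tendsto (fun n : ℕ => Real.exp (-(((n : ℝ) + 1) / 2))) atTop (nhds 0) := by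
      refine Real.tendsto_exp_neg_atTop_nhds_zero.comp ?_
      exact (tendsto_atTop_add_const_right _ _ tendsto_natCast_atTop_atTop).atTop_div_const
        (by norm_num)
    exact (h1.eventually (gt_mem_nhds (norm_pos_iff.2 hy))).mono fun n hn => hn.le
  refine cover.integrable_of_integral_bounded_of_nonneg_ae
    (8 * (B * volume.real (closedBall (0 : Plane) ρ'))) (fun n => ?_) ?_
    (Eventually.of_forall fun n => ?_)
  · rw [IntegrableOn, Measure.restrict_restrict (measurableSet_le measurable_const measurable_norm)]
    exact (main n).1
  · filter_upwards [ae_restrict_mem measurableSet_ball, ae_restrict_of_ae ae_ne_zero] with y h1 h2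
    have hyR : y ∈ pdisk R :=
      ⟨norm_pos_iff.2 h2, (by simpa using h1 : ‖y‖ < ρ).trans hρR⟩
    exact add_nonneg (div_nonneg (hv0 y hyR) (norm_nonneg _)) (hf y hyR)
  · rw [Measure.restrict_restrict (measurableSet_le measurable_const measurable_norm)]
    exact (main n).2

/-- `v` is nonnegative, of class `C²` and superharmonic on the punctured disk of radius `R`. -/
structure PosSuperharmonic (R : ℝ) (v : Plane → ℝ) : Prop where
  contDiffOn : ContDiffOn ℝ 2 v (pdisk R)
  nonneg : ∀ z ∈ pdisk R, 0 ≤ v z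
  lap_nonneg : ∀ z ∈ pdisk R, 0 ≤ -lap v z

namespace PosSuperharmonic

variable {R ρ : ℝ} {v : Plane → ℝ}

lemma ae_mem_pdisk (hρR : ρ < R) : ∀ᵐ y ∂volume.restrict (ball (0 : Plane) ρ), y ∈ pdisk R := by
  filter_upwards [ae_restrict_mem measurableSet_ball, ae_restrict_of_ae ae_ne_zero] with y h1 h2
  exact ⟨norm_pos_iff.2 h2, (by simpa using h1 : ‖y‖ < ρ).trans hρR⟩

lemma aestronglyMeasurable_of_continuousOn {w : Plane → ℝ} (hρR : ρ < R)
    (hw : ContinuousOn w (pdisk R)) :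
    AEStronglyMeasurable w (volume.restrict (ball (0 : Plane) ρ)) := by
  have h : (ball (0 : Plane) ρ ∩ pdisk R : Set Plane) =ᵐ[volume] ball (0 : Plane) ρ := by
    filter_upwards [(ae_restrict_iff' measurableSet_ball).1 (ae_mem_pdisk hρR)] with y hy
    exact propext ⟨fun h => h.1, fun h => ⟨h, hy h⟩⟩
  rw [← Measure.restrict_congr_set h]
  exact (hw.mono Set.inter_subset_right).aestronglyMeasurable
    (measurableSet_ball.inter (isOpen_pdisk R).measurableSet)

lemma integrableOn_div_norm (h : PosSuperharmonic R v) (hρR : ρ < R) (hρ1 : ρ < 1) :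
    IntegrableOn (fun y => v y / ‖y‖) (ball 0 ρ) := by
  rcases le_or_gt ρ 0 with h0 | h0
  · simp [ball_eq_empty.2 h0]
  refine (integrableOn_of_superharmonic h.1 h.2 h.3 h0 hρR hρ1).mono'
    (aestronglyMeasurable_of_continuousOn hρR
      (h.1.continuousOn.div continuousOn_id.norm fun y hy => hy.1.ne')) ?_
  filter_upwards [ae_mem_pdisk hρR] with y hy
  rw [Real.norm_of_nonneg (div_nonneg (h.2 y hy) (norm_nonneg _))]
  linarith [h.3 y hy]

lemma integrableOn_lap (h : PosSuperharmonic R v) (hρR : ρ < R) (hρ1 : ρ < 1) :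
    IntegrableOn (lap v) (ball 0 ρ) := by
  rcases le_or_gt ρ 0 with h0 | h0
  · simp [ball_eq_empty.2 h0]
  refine (integrableOn_of_superharmonic h.1 h.2 h.3 h0 hρR hρ1).mono'
    (aestronglyMeasurable_of_continuousOn hρR (lap_continuousOn (isOpen_pdisk R) h.1)) ?_
  filter_upwards [ae_mem_pdisk hρR] with y hy
  rw [← norm_neg, Real.norm_of_nonneg (h.3 y hy)]
  linarith [div_nonneg (h.2 y hy) (norm_nonneg y)]

lemma integrableOn (h : PosSuperharmonic R v) (hρR : ρ < R) (hρ1 : ρ < 1) :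
    IntegrableOn v (ball 0 ρ) := by
  refine (h.integrableOn_div_norm hρR hρ1).mono'
    (aestronglyMeasurable_of_continuousOn hρR h.1.continuousOn) ?_
  filter_upwards [ae_mem_pdisk hρR, ae_restrict_mem measurableSet_ball] with y hy hy2
  have hy1 : ‖y‖ < ρ := by simpa using hy2
  rw [Real.norm_of_nonneg (h.2 y hy), le_div_iff₀ hy.1]
  exact mul_le_of_le_one_right (h.2 y hy) (hy1.trans hρ1).le

end PosSuperharmonic

lemma integrable_of_eq_zero_of_lt {w : Plane → ℝ} {ρ ρ' : ℝ} (hw : IntegrableOn w (ball 0 ρ'))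
    {φ : Plane → ℝ} (hφ : Continuous φ) (h : ∀ y, ρ < ‖y‖ → φ y = 0) (hρ : ρ < ρ') :
    Integrable fun y => φ y * w y := by
  obtain ⟨c, hc⟩ := (isCompact_closedBall (0 : Plane) ρ').exists_bound_of_continuousOn
    hφ.continuousOn
  rw [← integrableOn_iff_integrable_of_support_subset (s := ball 0 ρ')]
  · refine Integrable.bdd_mul hw hφ.aestronglyMeasurable (c := c) ?_
    filter_upwards [ae_restrict_mem measurableSet_ball] with y hy
    exact hc y (ball_subset_closedBall hy)
  · intro y hy
    by_contra hy2
    have : ρ < ‖y‖ := hρ.trans_le (by simpa using hy2)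
    simp [h y this] at hy

lemma lap_eq_zero_of_lt {φ : Plane → ℝ} {ρ : ℝ} (h : ∀ y, ρ < ‖y‖ → φ y = 0) {y : Plane}
    (hy : ρ < ‖y‖) : lap φ y = 0 := by
  have hz : φ =ᶠ[nhds y] fun _ => 0 := by
    filter_upwards [(isOpen_lt continuous_const continuous_norm).mem_nhds hy] with x hx
    exact h x hx
  rw [hz.lap_eq]; simp [lap]

lemma contDiff_lap_continuous {φ : Plane → ℝ} (hφ : ContDiff ℝ 2 φ) : Continuous (lap φ) :=
  continuousOn_univ.1 (lap_continuousOn isOpen_univ hφ.contDiffOn)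

lemma norm_cutoff_term_le {R ρ c : ℝ} {v φ : Plane → ℝ} (h : PosSuperharmonic R v)
    (hρR : ρ < R) (hρ1 : ρ < 1) (hφ : ContDiff ℝ 2 φ) (hc0 : 0 ≤ c)
    (hc : ∀ y, ‖y‖ ≤ ρ → |φ y| ≤ c * ‖y‖ ∧ |lap φ y| ≤ c ∧ ‖fderiv ℝ φ y‖ ≤ c) {T : ℝ}
    (hT : 1 ≤ T) {y : Plane} (hy : y ≠ 0) (hyρ : ‖y‖ ≤ ρ) :
    |v y * lap (fun x => φ x * cutoff T (logPot 0 x)) y| ≤ 19 * c * (v y / ‖y‖) := by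
  have hy0 := norm_pos_iff.2 hy
  have hT0 : 0 < T := by linarith
  have hL : 0 ≤ logPot 0 y := logPot_zero_nonneg (hyρ.trans hρ1.le)
  obtain ⟨h1, h2, h3⟩ := hc y hyρ
  have hv0 := h.2 y ⟨hy0, hyρ.trans_lt hρR⟩
  obtain ⟨a1, a2⟩ := cutoff_mem_Icc hT0 hL
  obtain ⟨b1, b2⟩ := deriv_deriv_cutoff_mem_Icc hT0 hL
  have b3 : 6 / T ^ 2 ≤ 6 := div_le_self (by norm_num) (one_le_pow₀ hT)
  have d1 := abs_deriv_cutoff_le hT0 hL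
  have d2 : 3 / T ≤ 3 := div_le_self (by norm_num) hT
  rw [lap_mul_comp_logPot hφ (cutoff_contDiff T) hy, abs_mul, abs_of_nonneg hv0]
  have e1 : |φ y * (deriv (deriv (cutoff T)) (logPot 0 y) / ‖y‖ ^ 2)| ≤ 6 * c / ‖y‖ := by
    rw [abs_mul, abs_div, abs_of_nonneg b1, abs_of_pos (pow_pos hy0 2)]
    calc _ ≤ (c * ‖y‖) * (6 / ‖y‖ ^ 2) := by gcongr; exact b2.trans b3
      _ = _ := by field_simp
  have e2 : |cutoff T (logPot 0 y) * lap φ y| ≤ c / ‖y‖ := by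
    rw [abs_mul, abs_of_nonneg a1]
    calc _ ≤ 1 * c := by gcongr
      _ ≤ _ := by rw [one_mul]; exact le_div_self hc0 hy0 (hyρ.trans hρ1.le)
  have e3 : |2 * (deriv (cutoff T) (logPot 0 y) * gdot φ (logPot 0) y)| ≤ 12 * c / ‖y‖ := by
    rw [abs_mul, abs_mul, abs_of_pos (by norm_num : (0 : ℝ) < 2)]
    calc _ ≤ 2 * (3 * (2 * c / ‖y‖)) := by
          gcongr
          · exact d1.trans d2
          · exact (abs_gdot_logPot_le _ hy).trans (by gcongr)
      _ = _ := by ring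
  calc _ ≤ v y * (6 * c / ‖y‖ + (c / ‖y‖ + 12 * c / ‖y‖)) := by
        gcongr
        exact (abs_add_le _ _).trans (add_le_add e1 ((abs_add_le _ _).trans (add_le_add e2 e3)))
    _ = _ := by ring

lemma tendsto_lap_mul_cutoff {φ : Plane → ℝ} (hφ : ContDiff ℝ 2 φ) {y : Plane} (hy : y ≠ 0)
    (hy1 : ‖y‖ ≤ 1) :
    Tendsto (fun T => lap (fun x => φ x * cutoff T (logPot 0 x)) y) atTop (nhds (lap φ y)) := by
  have hL : 0 ≤ logPot 0 y := logPot_zero_nonneg hy1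
  have h1 : Tendsto (fun T => deriv (deriv (cutoff T)) (logPot 0 y)) atTop (nhds 0) := by
    refine squeeze_zero' ((eventually_gt_atTop 0).mono fun T hT =>
      (deriv_deriv_cutoff_mem_Icc hT hL).1) ((eventually_gt_atTop 0).mono fun T hT =>
      (deriv_deriv_cutoff_mem_Icc hT hL).2) ?_
    exact tendsto_const_nhds.div_atTop (tendsto_pow_atTop (by norm_num))
  have h2 : Tendsto (fun T => deriv (cutoff T) (logPot 0 y)) atTop (nhds 0) := by
    refine squeeze_zero_norm' ((eventually_gt_atTop 0).mono fun T hT =>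
      abs_deriv_cutoff_le hT hL) ?_
    exact tendsto_const_nhds.div_atTop tendsto_id
  have := ((h1.div_const (‖y‖ ^ 2)).const_mul (φ y)).add
    (((tendsto_cutoff (logPot 0 y)).mul_const (lap φ y)).add
      ((h2.mul_const (gdot φ (logPot 0) y)).const_mul 2))
  simp only [zero_div, mul_zero, zero_mul, one_mul, add_zero, zero_add] at this
  refine this.congr fun T => ?_
  rw [lap_mul_comp_logPot hφ (cutoff_contDiff T) hy]

/-- Green's identity across the puncture for test functions vanishing at the puncture. -/
lemma integral_mul_lap_of_apply_zero {R ρ : ℝ} {v φ : Plane → ℝ} (h : PosSuperharmonic R v)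
    (hρR : ρ < R) (hρ1 : ρ < 1) (hφ : ContDiff ℝ 2 φ) (hφ0 : φ 0 = 0)
    (hs : ∀ y, ρ < ‖y‖ → φ y = 0) :
    ∫ y, v y * lap φ y = ∫ y, φ y * lap v y := by
  obtain ⟨ρ', hρ', hρ'2⟩ := exists_between (lt_min hρR hρ1)
  obtain ⟨hρ'R, hρ'1⟩ := lt_min_iff.1 hρ'2
  obtain ⟨c, hc0, hc⟩ := exists_bound_of_contDiff hφ ρ
  have hc' : ∀ y, ‖y‖ ≤ ρ → |φ y| ≤ c * ‖y‖ ∧ |lap φ y| ≤ c ∧ ‖fderiv ℝ φ y‖ ≤ c := by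
    intro y hy
    refine ⟨?_, (hc y hy).2⟩
    have := (convex_closedBall (0 : Plane) ρ).norm_image_sub_le_of_norm_fderiv_le (𝕜 := ℝ) (f := φ)
      (C := c) (x := 0) (y := y) (fun x _ => hφ.differentiable (by norm_num) x)
      (fun x hx => (hc x (by simpa using hx)).2.2)
      (by simpa using (norm_nonneg y).trans hy) (by simpa using hy)
    simpa [hφ0] using this
  let ψ : ℕ → Plane → ℝ := fun n x => φ x * cutoff (n + 1) (logPot 0 x)
  have hn : Tendsto (fun n : ℕ => (n : ℝ) + 1) atTop atTop :=
    tendsto_atTop_add_const_right _ _ tendsto_natCast_atTop_atTop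
  have hn1 (n : ℕ) : (1 : ℝ) ≤ n + 1 := by linarith [Nat.cast_nonneg (α := ℝ) n]
  have hn0 (n : ℕ) : (0 : ℝ) < n + 1 := by positivity
  have hψs (n : ℕ) : ∀ y, ρ < ‖y‖ → ψ n y = 0 := fun y hy => by simp [ψ, hs y hy]
  have key (n : ℕ) := integral_mul_lap_of_punctured (ψ := ψ n) (ε := Real.exp (-(n + 1))) (ρ := ρ)
    h.1 (mul_comp_logPot_contDiffOn hφ (cutoff_contDiff _)) (Real.exp_pos _)
    (fun y h1 h2 => by
      simp [ψ, cutoff_eq_zero (hn0 n) (le_logPot_zero (norm_pos_iff.1 h1) h2.le)])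
    hρR (hψs n)
  have L1 : Tendsto (fun n => ∫ y, v y * lap (ψ n) y) atTop (nhds (∫ y, v y * lap φ y)) := by
    refine tendsto_integral_of_dominated_convergence
      (fun y => (ball (0 : Plane) ρ').indicator (fun y => 19 * c * (v y / ‖y‖)) y)
      (fun n => (key n).1.aestronglyMeasurable)
      ((integrable_indicator_iff measurableSet_ball).2
        ((h.integrableOn_div_norm hρ'R hρ'1).const_mul (19 * c))) (fun n => ?_) ?_
    · filter_upwards [ae_ne_zero] with y hy
      rcases le_or_gt ‖y‖ ρ with h1 | h1
      · rw [Set.indicator_of_mem (by simpa using h1.trans_lt hρ')]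
        exact norm_cutoff_term_le h hρR hρ1 hφ hc0 hc' (hn1 n) hy h1
      · rw [lap_eq_zero_of_lt (hψs n) h1]
        simp only [mul_zero, norm_zero]
        refine Set.indicator_apply_nonneg fun h2 => ?_
        have : 0 ≤ v y := h.2 y ⟨norm_pos_iff.2 hy, (by simpa using h2 : ‖y‖ < ρ').trans hρ'R⟩
        positivity
    · filter_upwards [ae_ne_zero] with y hy
      rcases le_or_gt ‖y‖ ρ with h1 | h1
      · exact ((tendsto_lap_mul_cutoff hφ hy (h1.trans hρ1.le)).comp hn).const_mul _
      · simp [lap_eq_zero_of_lt (hψs _) h1, lap_eq_zero_of_lt hs h1]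
  have L2 : Tendsto (fun n => ∫ y, ψ n y * lap v y) atTop (nhds (∫ y, φ y * lap v y)) := by
    refine tendsto_integral_of_dominated_convergence (fun y => ‖φ y * lap v y‖)
      (fun n => (key n).2.1.aestronglyMeasurable)
      (integrable_of_eq_zero_of_lt (h.integrableOn_lap hρ'R hρ'1) hφ.continuous hs hρ').norm
      (fun n => ?_) ?_
    · filter_upwards with y
      rcases le_or_gt ‖y‖ ρ with h1 | h1
      · obtain ⟨a1, a2⟩ := cutoff_mem_Icc (hn0 n) (logPot_zero_nonneg (h1.trans hρ1.le))
        rw [norm_mul, norm_mul, norm_mul, Real.norm_of_nonneg a1]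
        gcongr
        exact mul_le_of_le_one_right (norm_nonneg _) a2
      · rw [hψs n y h1, zero_mul, norm_zero]
        exact norm_nonneg _
    · filter_upwards with y
      simpa [ψ] using (((tendsto_cutoff (logPot 0 y)).comp hn).const_mul (φ y)).mul_const (lap v y)
  exact tendsto_nhds_unique L1 (L2.congr fun n => ((key n).2.2).symm)

/-- Green's identity across the puncture: the distributional Laplacian of a positive superharmonic
function is its pointwise Laplacian plus a point mass. -/
lemma exists_integral_mul_lap {R ρ : ℝ} {v : Plane → ℝ} (h : PosSuperharmonic R v)
    (hρ0 : 0 < ρ) (hρR : ρ < R) (hρ1 : ρ < 1) :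
    ∃ M : ℝ, ∀ φ : Plane → ℝ, ContDiff ℝ 2 φ → (∀ y, ρ < ‖y‖ → φ y = 0) →
      ∫ y, v y * -lap φ y = (∫ y, φ y * -lap v y) + M * φ 0 := by
  obtain ⟨ρ', hρ', hρ'2⟩ := exists_between (lt_min hρR hρ1)
  obtain ⟨hρ'R, hρ'1⟩ := lt_min_iff.1 hρ'2
  let χ : ContDiffBump (0 : Plane) := ⟨ρ / 2, ρ, by linarith, by linarith⟩
  have hχ : ContDiff ℝ 2 χ := χ.contDiff
  have hχs : ∀ y, ρ < ‖y‖ → χ y = 0 := fun y hy => χ.zero_of_le_dist (by simpa [χ] using hy.le)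
  have hχ0 : χ (0 : Plane) = 1 := χ.one_of_mem_closedBall
    (mem_closedBall_self (by simp only [χ]; linarith))
  have J1 {φ : Plane → ℝ} (hφ : ContDiff ℝ 2 φ) (hs : ∀ y, ρ < ‖y‖ → φ y = 0) :
      Integrable fun y => lap φ y * v y :=
    integrable_of_eq_zero_of_lt (h.integrableOn hρ'R hρ'1) (contDiff_lap_continuous hφ)
      (fun y hy => lap_eq_zero_of_lt hs hy) hρ'
  have J2 {φ : Plane → ℝ} (hφ : ContDiff ℝ 2 φ) (hs : ∀ y, ρ < ‖y‖ → φ y = 0) :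
      Integrable fun y => φ y * lap v y :=
    integrable_of_eq_zero_of_lt (h.integrableOn_lap hρ'R hρ'1) hφ.continuous hs hρ'
  refine ⟨-(∫ y, lap χ y * v y) + ∫ y, χ y * lap v y, fun φ hφ hs => ?_⟩
  have key := integral_mul_lap_of_apply_zero (φ := fun y => φ y + -φ 0 * χ y) h hρR hρ1
    (hφ.add (contDiff_const.mul hχ)) (by simp [hχ0]) (fun y hy => by simp [hs y hy, hχs y hy])
  have e1 : ∀ y, v y * lap (fun y => φ y + -φ 0 * χ y) y =
      lap φ y * v y + -φ 0 * (lap χ y * v y) := fun y => by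
    rw [lap_add hφ.contDiffAt (contDiffAt_const.mul hχ.contDiffAt), lap_const_mul hχ.contDiffAt]
    ring
  have e2 : ∀ y, (φ y + -φ 0 * χ y) * lap v y = φ y * lap v y + -φ 0 * (χ y * lap v y) :=
    fun y => by ring
  simp only [e1, e2] at key
  rw [integral_add (J1 hφ hs) ((J1 hχ hχs).const_mul _),
    integral_add (J2 hφ hs) ((J2 hχ hχs).const_mul _), integral_const_mul,
    integral_const_mul] at key
  have e3 : ∫ y, v y * -lap φ y = -∫ y, lap φ y * v y := by
    rw [← integral_neg]; congr 1; funext y; ring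
  have e4 : ∫ y, φ y * -lap v y = -∫ y, φ y * lap v y := by
    rw [← integral_neg]; congr 1; funext y; ring
  rw [e3, e4]
  linear_combination -key

lemma logPot_nonneg {δ : ℝ} {x : Plane} (h : ‖x‖ ^ 2 + δ ^ 2 ≤ 1) : 0 ≤ logPot δ x := by
  have := Real.log_nonpos (by positivity) h
  unfold logPot; linarith

lemma logPot_le_zero_left (δ : ℝ) {x : Plane} (hx : x ≠ 0) : logPot δ x ≤ logPot 0 x := by
  have h0 := normSq_add_pos_left (δ := 0) hx
  have := Real.log_le_log h0 (by nlinarith [sq_nonneg δ] : ‖x‖ ^ 2 + 0 ^ 2 ≤ ‖x‖ ^ 2 + δ ^ 2)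
  exact mul_le_mul_of_nonpos_left this (by norm_num)

lemma tendsto_logPot {x : Plane} (hx : x ≠ 0) {u : ℕ → ℝ} (hu : Tendsto u atTop (nhds 0)) :
    Tendsto (fun n => logPot (u n) x) atTop (nhds (logPot 0 x)) := by
  unfold logPot
  exact ((Real.continuousAt_log (normSq_add_pos_left hx).ne').tendsto.comp
    (tendsto_const_nhds.add (hu.pow 2))).const_mul _

lemma tendsto_gdot_logPot (φ : Plane → ℝ) {x : Plane} (hx : x ≠ 0) {u : ℕ → ℝ}
    (hu : Tendsto u atTop (nhds 0)) :
    Tendsto (fun n => gdot φ (logPot (u n)) x) atTop (nhds (gdot φ (logPot 0) x)) := by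
  have h (i : Fin 2) : Tendsto (fun n => pd i (logPot (u n)) x) atTop
      (nhds (pd i (logPot 0) x)) := by
    simp only [logPot_pd (normSq_add_pos_left hx)]
    exact (((tendsto_const_nhds.add (hu.pow 2)).inv₀
      (normSq_add_pos_left hx).ne').const_mul _).neg
  exact ((h 0).const_mul _).add ((h 1).const_mul _)

/-- The truncation of `logPot δ` by a bump function. -/
noncomputable def bumpPot (χ : ContDiffBump (0 : Plane)) (δ : ℝ) (x : Plane) : ℝ :=
  χ x * logPot δ x

/-- The part of the Laplacian of `bumpPot χ δ` that involves derivatives of `χ`. -/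
noncomputable def bumpErr (χ : ContDiffBump (0 : Plane)) (δ : ℝ) (x : Plane) : ℝ :=
  logPot δ x * lap χ x + 2 * gdot χ (logPot δ) x

section bump

variable (χ : ContDiffBump (0 : Plane))

lemma bump_contDiff {n : ℕ∞} : ContDiff ℝ n χ := χ.contDiff

lemma bumpPot_contDiffAt {δ : ℝ} {x : Plane} (h : 0 < ‖x‖ ^ 2 + δ ^ 2) {n : ℕ∞} :
    ContDiffAt ℝ n (bumpPot χ δ) x :=
  (bump_contDiff χ).contDiffAt.mul (logPot_contDiffAt h)

lemma bumpPot_contDiff {δ : ℝ} (hδ : δ ≠ 0) {n : ℕ∞} : ContDiff ℝ n (bumpPot χ δ) :=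
  contDiff_iff_contDiffAt.2 fun x => bumpPot_contDiffAt χ (normSq_add_pos_right hδ x)

lemma lap_bumpPot {δ : ℝ} {x : Plane} (h : 0 < ‖x‖ ^ 2 + δ ^ 2) :
    lap (bumpPot χ δ) x = -(χ x * (2 * δ ^ 2 / (‖x‖ ^ 2 + δ ^ 2) ^ 2)) + bumpErr χ δ x := by
  have h1 : ContDiffAt ℝ 2 χ x := (bump_contDiff χ (n := 2)).contDiffAt
  have := lap_mul h1 (logPot_contDiffAt (n := 2) h)
  rw [logPot_lap h] at this
  unfold bumpPot bumpErr
  rw [this]; ring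

lemma bump_apply_eq_zero {x : Plane} (hx : χ.rOut ≤ ‖x‖) : χ x = 0 :=
  χ.zero_of_le_dist (by simpa using hx)

lemma bump_apply_eq_one {x : Plane} (hx : ‖x‖ ≤ χ.rIn) : χ x = 1 :=
  χ.one_of_mem_closedBall (by simpa using hx)

lemma bumpPot_eq_zero (δ : ℝ) {x : Plane} (hx : χ.rOut ≤ ‖x‖) : bumpPot χ δ x = 0 := by
  simp [bumpPot, bump_apply_eq_zero χ hx]

lemma bumpPot_eq_logPot (δ : ℝ) {x : Plane} (hx : ‖x‖ ≤ χ.rIn) :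
    bumpPot χ δ x = logPot δ x := by
  simp [bumpPot, bump_apply_eq_one χ hx]

variable {χ}

lemma normSq_add_le_one (hχ : χ.rOut ≤ 1 / 2) {δ : ℝ} (h0 : 0 ≤ δ) (hδ : δ ≤ 1 / 2) {x : Plane}
    (hx : ‖x‖ ≤ χ.rOut) : ‖x‖ ^ 2 + δ ^ 2 ≤ 1 := by
  have := norm_nonneg x
  nlinarith

lemma bumpPot_nonneg (hχ : χ.rOut ≤ 1 / 2) {δ : ℝ} (h0 : 0 ≤ δ) (hδ : δ ≤ 1 / 2) (x : Plane) :
    0 ≤ bumpPot χ δ x := by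
  rcases le_or_gt χ.rOut ‖x‖ with h | h
  · rw [bumpPot_eq_zero χ δ h]
  · exact mul_nonneg χ.nonneg (logPot_nonneg (normSq_add_le_one hχ h0 hδ h.le))

lemma bumpPot_le_zero_left (δ : ℝ) {x : Plane} (hx : x ≠ 0) : bumpPot χ δ x ≤ bumpPot χ 0 x :=
  mul_le_mul_of_nonneg_left (logPot_le_zero_left δ hx) χ.nonneg

lemma bumpPot_zero_le_logPot {x : Plane} (hx : ‖x‖ ≤ 1) : bumpPot χ 0 x ≤ logPot 0 x :=
  mul_le_of_le_one_left (logPot_zero_nonneg hx) χ.le_one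

/-- Away from the ball of radius `s` the truncated potential is at most `log (1 / s)`. -/
lemma bumpPot_zero_le_log (hχ : χ.rOut ≤ 1 / 2) {s : ℝ} (hs0 : 0 < s) (hs1 : s ≤ 1) {x : Plane}
    (hx : s ≤ ‖x‖) : bumpPot χ 0 x ≤ Real.log (1 / s) := by
  have hx0 : 0 < ‖x‖ := hs0.trans_le hx
  rw [one_div, Real.log_inv]
  have hs := Real.log_nonpos hs0.le hs1
  rcases le_or_gt χ.rOut ‖x‖ with h | h
  · rw [bumpPot_eq_zero χ 0 h]; linarith
  · refine (bumpPot_zero_le_logPot (by linarith)).trans ?_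
    rw [logPot_zero_left]
    linarith [Real.log_le_log hs0 hx]

lemma bumpPot_zero_le_inv (hχ : χ.rOut ≤ 1 / 2) {x : Plane} (hx : x ≠ 0) :
    bumpPot χ 0 x ≤ ‖x‖⁻¹ := by
  have hx0 := norm_pos_iff.2 hx
  rcases le_or_gt χ.rOut ‖x‖ with h | h
  · rw [bumpPot_eq_zero χ 0 h]; positivity
  · refine (bumpPot_zero_le_logPot (by linarith)).trans ?_
    rw [logPot_zero_left, ← Real.log_inv]
    linarith [Real.log_le_sub_one_of_pos (inv_pos.2 hx0)]

variable (χ)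

lemma bump_eventuallyEq_zero {x : Plane} (hx : χ.rOut < ‖x‖) :
    (χ : Plane → ℝ) =ᶠ[nhds x] fun _ => 0 := by
  filter_upwards [(isOpen_lt continuous_const continuous_norm).mem_nhds hx] with y hy
  exact bump_apply_eq_zero χ (le_of_lt hy)

lemma lap_bump_eq_zero {x : Plane} (hx : ‖x‖ < χ.rIn ∨ χ.rOut < ‖x‖) : lap χ x = 0 := by
  rcases hx with h | h
  · rw [(χ.eventuallyEq_one_of_mem_ball (by simpa using h)).lap_eq]
    simp [lap, Pi.one_def]
  · rw [(bump_eventuallyEq_zero χ h).lap_eq]; simp [lap]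

lemma gdot_bump_eq_zero (w : Plane → ℝ) {x : Plane} (hx : ‖x‖ < χ.rIn ∨ χ.rOut < ‖x‖) :
    gdot χ w x = 0 := by
  rcases hx with h | h
  · rw [(χ.eventuallyEq_one_of_mem_ball (by simpa using h)).gdot_eq]
    simp [gdot, pd, Pi.one_def]
  · rw [(bump_eventuallyEq_zero χ h).gdot_eq]; simp [gdot, pd]

lemma bumpErr_eq_zero (δ : ℝ) {x : Plane} (hx : ‖x‖ < χ.rIn ∨ χ.rOut < ‖x‖) :
    bumpErr χ δ x = 0 := by
  simp [bumpErr, lap_bump_eq_zero χ hx, gdot_bump_eq_zero χ _ hx]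

lemma bumpErr_zero_contDiff : ContDiff ℝ 1 (bumpErr χ 0) := by
  refine contDiff_iff_contDiffAt.2 fun x => ?_
  rcases eq_or_ne x 0 with rfl | hx
  · have : bumpErr χ 0 =ᶠ[nhds 0] fun _ => 0 := by
      filter_upwards [ball_mem_nhds (0 : Plane) χ.rIn_pos] with y hy
      exact bumpErr_eq_zero χ 0 (Or.inl (by simpa using hy))
    exact contDiffAt_const.congr_of_eventuallyEq this
  · have h3 : ContDiffAt ℝ 3 χ x := (bump_contDiff χ (n := 3)).contDiffAt
    have hL {n : WithTop ℕ∞} : ContDiffAt ℝ n (logPot 0) x :=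
      logPot_contDiffAt (normSq_add_pos_left hx)
    exact (hL.mul (lap_contDiffAt h3 (by norm_num))).add
      (contDiffAt_const.mul (gdot_contDiffAt h3 hL (by norm_num)))

lemma bumpErr_hasCompactSupport (δ : ℝ) : HasCompactSupport (bumpErr χ δ) :=
  HasCompactSupport.of_support_subset_isCompact (isCompact_closedBall 0 χ.rOut) fun x hx => by
    by_contra h
    exact hx (bumpErr_eq_zero χ δ (Or.inr (by simpa using h)))

lemma bumpPot_hasCompactSupport (δ : ℝ) : HasCompactSupport (bumpPot χ δ) :=
  HasCompactSupport.of_support_subset_isCompact (isCompact_closedBall 0 χ.rOut) fun x hx => by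
    by_contra h
    exact hx (bumpPot_eq_zero χ δ (le_of_lt (by simpa using h)))

lemma exists_bumpErr_bound (hχ : χ.rOut ≤ 1 / 2) :
    ∃ B : ℝ, 0 ≤ B ∧ ∀ δ, 0 ≤ δ → δ ≤ 1 / 2 → ∀ x, |bumpErr χ δ x| ≤ B := by
  obtain ⟨c, hc0, hc⟩ := exists_bound_of_contDiff (bump_contDiff χ (n := 2)) χ.rOut
  have hr := χ.rIn_pos
  refine ⟨χ.rIn⁻¹ * c + 2 * (2 * c / χ.rIn), by positivity, fun δ h0 hδ x => ?_⟩
  rcases lt_or_ge ‖x‖ χ.rIn with h | h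
  · rw [bumpErr_eq_zero χ δ (Or.inl h), abs_zero]; positivity
  rcases lt_or_ge χ.rOut ‖x‖ with h' | h'
  · rw [bumpErr_eq_zero χ δ (Or.inr h'), abs_zero]; positivity
  have hx0 : 0 < ‖x‖ := hr.trans_le h
  have hx := norm_pos_iff.1 hx0
  obtain ⟨-, h2, h3⟩ := hc x h'
  refine (abs_add_le _ _).trans (add_le_add ?_ ?_)
  · rw [abs_mul, abs_of_nonneg (logPot_nonneg (normSq_add_le_one hχ h0 hδ h'))]
    gcongr
    refine (logPot_le_zero_left δ hx).trans ?_
    rw [logPot_zero_left, ← Real.log_inv]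
    have h5 : ‖x‖⁻¹ ≤ χ.rIn⁻¹ := inv_anti₀ hr h
    linarith [Real.log_le_sub_one_of_pos (inv_pos.2 hx0)]
  · rw [abs_mul, abs_of_pos (by norm_num : (0 : ℝ) < 2)]
    gcongr
    exact (abs_gdot_logPot_le _ hx).trans (by gcongr)

end bump

/-- The total mass of the Laplacian of `-logPot 1`. -/
noncomputable def potMass : ℝ := ∫ x : Plane, 2 / (1 + ‖x‖ ^ 2) ^ 2

lemma integrable_potMass : Integrable fun x : Plane => 2 / (1 + ‖x‖ ^ 2) ^ 2 := by
  have h := (integrable_rpow_neg_one_add_norm_sq (E := Plane) (μ := volume) (r := 4)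
    (by simp; norm_num)).const_mul 2
  refine h.congr (ae_of_all _ fun x => ?_)
  have h0 : (0 : ℝ) ≤ 1 + ‖x‖ ^ 2 := by positivity
  have : (-4 / 2 : ℝ) = -((2 : ℕ) : ℝ) := by norm_num
  simp only [this, Real.rpow_neg h0, Real.rpow_natCast]
  rfl

lemma potMass_pos : 0 < potMass := by
  refine (integral_pos_iff_support_of_nonneg (fun x => by positivity) integrable_potMass).2 ?_
  have : (Function.support fun x : Plane => 2 / (1 + ‖x‖ ^ 2) ^ 2) = Set.univ :=
    Set.eq_univ_of_forall fun x => (by positivity : (0 : ℝ) < 2 / (1 + ‖x‖ ^ 2) ^ 2).ne'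
  rw [this]
  exact Measure.measure_univ_pos.2 (NeZero.ne _)

lemma tendsto_integral_lap_logPot {g : Plane → ℝ} {z : Plane} (hg : Integrable g)
    (hz : ContinuousAt g z) :
    Tendsto (fun n : ℕ => ∫ y, 2 * (1 / ((n : ℝ) + 2)) ^ 2 /
      (‖z - y‖ ^ 2 + (1 / ((n : ℝ) + 2)) ^ 2) ^ 2 * g y) atTop (nhds (potMass * g z)) := by
  have hκ := potMass_pos
  have h := tendsto_integral_comp_smul_smul_of_integrable' (μ := (volume : Measure Plane))
    (φ := fun x => potMass⁻¹ * (2 / (1 + ‖x‖ ^ 2) ^ 2)) (fun x => by positivity)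
    (by rw [integral_const_mul]; exact inv_mul_cancel₀ hκ.ne') ?_ hg hz
  · have hn : Tendsto (fun n : ℕ => (n : ℝ) + 2) atTop atTop :=
      tendsto_atTop_add_const_right _ _ tendsto_natCast_atTop_atTop
    refine ((h.comp hn).const_mul potMass).congr fun n => ?_
    simp only [Function.comp, finrank_euclideanSpace, Fintype.card_fin, smul_eq_mul, norm_smul]
    rw [← integral_const_mul]
    congr 1
    funext y
    have hn2 : (0 : ℝ) < n + 2 := by positivity
    rw [Real.norm_of_nonneg hn2.le]
    field_simp
    ring
  · simp only [finrank_euclideanSpace, Fintype.card_fin]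
    have h1 : Tendsto (fun x : Plane => potMass⁻¹ * 2 / (1 + ‖x‖ ^ 2))
        (Bornology.cobounded Plane) (nhds 0) := by
      refine tendsto_const_nhds.div_atTop (tendsto_atTop_add_const_left _ _ ?_)
      exact (tendsto_pow_atTop (by norm_num)).comp tendsto_norm_cobounded_atTop
    refine squeeze_zero (fun x => by positivity) (fun x => ?_) h1
    have h2 : ‖x‖ ^ 2 / (1 + ‖x‖ ^ 2) ≤ 1 := div_le_one_of_le₀ (by linarith) (by positivity)
    calc _ = potMass⁻¹ * 2 / (1 + ‖x‖ ^ 2) * (‖x‖ ^ 2 / (1 + ‖x‖ ^ 2)) := by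
          field_simp
      _ ≤ _ := mul_le_of_le_one_right (by positivity) h2

lemma measurable_logPot (δ : ℝ) : Measurable (logPot δ) := by unfold logPot; fun_prop

lemma measurable_bumpPot (χ : ContDiffBump (0 : Plane)) (δ : ℝ) : Measurable (bumpPot χ δ) :=
  χ.continuous.measurable.mul (measurable_logPot δ)

lemma continuous_bumpErr (χ : ContDiffBump (0 : Plane)) {δ : ℝ} (hδ : δ ≠ 0) :
    Continuous (bumpErr χ δ) := by
  have hL : ContDiff ℝ 2 (logPot δ) :=
    contDiff_iff_contDiffAt.2 fun x => logPot_contDiffAt (normSq_add_pos_right hδ x)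
  have h2 := bump_contDiff χ (n := 2)
  refine (hL.continuous.mul (contDiff_lap_continuous h2)).add (continuous_const.mul ?_)
  exact (contDiff_iff_contDiffAt.2 fun x => gdot_contDiffAt (m := 0) h2.contDiffAt
    hL.contDiffAt (by norm_num)).continuous

lemma integrable_indicator_norm_inv (s : ℝ) :
    Integrable ((ball (0 : Plane) s).indicator fun x => ‖x‖⁻¹) := by
  rw [integrable_indicator_iff measurableSet_ball]
  simpa only [Real.rpow_neg_one] using integrableOn_norm_rpow (p := -1) (by norm_num) s

lemma integrable_mul_bump (χ : ContDiffBump (0 : Plane)) {V : Plane → ℝ} (hV : Integrable V)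
    (z : Plane) : Integrable fun y => V y * χ (z - y) :=
  hV.mul_bdd (c := 1) (χ.continuous.comp (by fun_prop : Continuous fun y => z - y)
    ).aestronglyMeasurable
    (ae_of_all _ fun y => by
      change ‖χ (z - y)‖ ≤ 1
      rw [Real.norm_of_nonneg χ.nonneg]; exact χ.le_one)

lemma mul_bumpPot_le {χ : ContDiffBump (0 : Plane)} (hχ : χ.rOut ≤ 1 / 2) {F : Plane → ℝ}
    (hF : ∀ y, 0 ≤ F y) {s Λ : ℝ} (hs0 : 0 < s) (hs1 : s ≤ 1) {z y : Plane} (hy : y ≠ z)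
    (hΛ : y ∈ ball z s → F y ≤ Λ) :
    F y * bumpPot χ 0 (z - y) ≤
      Λ * (ball (0 : Plane) s).indicator (fun x => ‖x‖⁻¹) (z - y) + Real.log (1 / s) * F y := by
  have hlog : 0 ≤ Real.log (1 / s) := Real.log_nonneg ((one_le_div hs0).2 hs1)
  have hx : z - y ≠ 0 := sub_ne_zero.2 hy.symm
  rcases lt_or_ge ‖z - y‖ s with h | h
  · have h1 : y ∈ ball z s := by rwa [mem_ball, dist_comm, dist_eq_norm]
    rw [Set.indicator_of_mem (by simpa using h)]
    have h2 := bumpPot_nonneg hχ le_rfl (by norm_num) (z - y)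
    calc _ ≤ Λ * ‖z - y‖⁻¹ :=
          mul_le_mul (hΛ h1) (bumpPot_zero_le_inv hχ hx) h2 ((hF y).trans (hΛ h1))
      _ ≤ _ := le_add_of_nonneg_right (mul_nonneg hlog (hF y))
  · rw [Set.indicator_of_notMem (by simpa using h), mul_zero, zero_add, mul_comm]
    exact mul_le_mul_of_nonneg_right (bumpPot_zero_le_log hχ hs0 hs1 h) (hF y)

lemma ae_ne (z : Plane) : ∀ᵐ y : Plane, y ≠ z := by simp [ae_iff]

lemma integrable_mul_bumpPot {χ : ContDiffBump (0 : Plane)} (hχ : χ.rOut ≤ 1 / 2) {F : Plane → ℝ}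
    (hFi : Integrable F) (hF : ∀ y, 0 ≤ F y) {s Λ : ℝ} (hs0 : 0 < s) (hs1 : s ≤ 1) {z : Plane}
    (hΛ : ∀ y ∈ ball z s, F y ≤ Λ) : Integrable fun y => F y * bumpPot χ 0 (z - y) := by
  refine ((((integrable_indicator_norm_inv s).comp_sub_left z).const_mul Λ).add
    (hFi.const_mul (Real.log (1 / s)))).mono' (hFi.aestronglyMeasurable.mul
      ((measurable_bumpPot χ 0).comp (measurable_const.sub measurable_id)).aestronglyMeasurable) ?_
  filter_upwards [ae_ne z] with y hy
  rw [Real.norm_of_nonneg (mul_nonneg (hF y) (bumpPot_nonneg hχ le_rfl (by norm_num) _))]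
  exact mul_bumpPot_le hχ hF hs0 hs1 hy (hΛ y)

/-- The Laplacian `-Δv`, extended by zero outside a ball. -/
noncomputable def source (ρ : ℝ) (v : Plane → ℝ) : Plane → ℝ :=
  (ball (0 : Plane) ρ \ {0}).indicator fun y => -lap v y

section Representation

variable {R ρ : ℝ} {v : Plane → ℝ}

lemma source_nonneg (h : PosSuperharmonic R v) (hρR : ρ < R) (y : Plane) : 0 ≤ source ρ v y := by
  refine Set.indicator_apply_nonneg fun hy => h.3 y ⟨norm_pos_iff.2 (by simpa using hy.2), ?_⟩
  exact (by simpa using hy.1 : ‖y‖ < ρ).trans hρR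

lemma source_eq_ae : source ρ v =ᵐ[volume] (ball (0 : Plane) ρ).indicator fun y => -lap v y := by
  filter_upwards [ae_ne_zero] with y hy
  simp [source, Set.indicator, hy]

lemma source_integrable (h : PosSuperharmonic R v) (hρR : ρ < R) (hρ1 : ρ < 1) :
    Integrable (source ρ v) :=
  ((integrable_indicator_iff measurableSet_ball).2 (h.integrableOn_lap hρR hρ1).neg).congr
    source_eq_ae.symm

lemma source_eq {y : Plane} (hy0 : y ≠ 0) (hy : ‖y‖ < ρ) : source ρ v y = -lap v y :=
  Set.indicator_of_mem (show y ∈ ball (0 : Plane) ρ \ {0} from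
    ⟨by simpa using hy, by simpa using hy0⟩) _

lemma source_eq_zero {y : Plane} (hy : ρ ≤ ‖y‖) : source ρ v y = 0 :=
  Set.indicator_of_notMem (fun h => by
    have : ‖y‖ < ρ := by simpa using h.1
    linarith) _

lemma source_le_of_ball (h : ContDiffOn ℝ 2 v (pdisk R)) {z : Plane} (hz : z ≠ 0)
    (hρR : ρ < R) : ∃ s Λ : ℝ, 0 < s ∧ s ≤ 1 ∧ ∀ y ∈ ball z s, source ρ v y ≤ Λ := by
  have hz0 := norm_pos_iff.2 hz
  obtain ⟨Λ, hΛ0, hΛ⟩ := continuousOn_annulus_bound (lap_continuousOn (isOpen_pdisk R) h)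
    (half_pos hz0) hρR
  refine ⟨min (‖z‖ / 2) 1, Λ, by positivity, min_le_right _ _, fun y hy => ?_⟩
  have hy1 : ‖y - z‖ < ‖z‖ / 2 := by
    rw [← dist_eq_norm]; exact (mem_ball.1 hy).trans_le (min_le_left _ _)
  have hy2 : ‖z‖ / 2 ≤ ‖y‖ := by
    have := norm_sub_norm_le z y
    rw [norm_sub_rev] at this; linarith
  rcases lt_or_ge ‖y‖ ρ with h1 | h1
  · rw [source_eq (norm_pos_iff.1 (by linarith)) h1]
    exact (neg_le_abs _).trans (hΛ y hy2 h1.le)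
  · rw [source_eq_zero h1]; exact hΛ0

lemma representation_regularized {χ : ContDiffBump (0 : Plane)} (h : PosSuperharmonic R v)
    (hρR : χ.rIn + χ.rOut < R) (hρ1 : χ.rIn + χ.rOut < 1) {M : ℝ}
    (hM : ∀ φ : Plane → ℝ, ContDiff ℝ 2 φ → (∀ y, χ.rIn + χ.rOut < ‖y‖ → φ y = 0) →
      ∫ y, v y * -lap φ y = (∫ y, φ y * -lap v y) + M * φ 0)
    {z : Plane} (hz : ‖z‖ < χ.rIn) {δ : ℝ} (hδ : 0 < δ) (hδ2 : δ ≤ 1 / 2) (hχ : χ.rOut ≤ 1 / 2) :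
    ∫ y, 2 * δ ^ 2 / (‖z - y‖ ^ 2 + δ ^ 2) ^ 2 *
        ((ball (0 : Plane) (χ.rIn + χ.rOut)).indicator v y * χ (z - y)) =
      (∫ y, (ball (0 : Plane) (χ.rIn + χ.rOut)).indicator v y * bumpErr χ δ (z - y)) +
      (∫ y, source (χ.rIn + χ.rOut) v y * bumpPot χ δ (z - y)) + M * bumpPot χ δ z := by
  set ρ := χ.rIn + χ.rOut with hρ
  have hVi : Integrable ((ball (0 : Plane) ρ).indicator v) :=
    (integrable_indicator_iff measurableSet_ball).2 (h.integrableOn hρR hρ1)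
  have hfar {y : Plane} (hy : ρ ≤ ‖y‖) : χ.rOut < ‖z - y‖ := by
    have := norm_sub_norm_le y z
    rw [norm_sub_rev] at this; linarith
  have key := hM (fun y => bumpPot χ δ (z - y))
    ((bumpPot_contDiff χ hδ.ne').comp (contDiff_const.sub contDiff_id))
    (fun y hy => bumpPot_eq_zero χ δ (hfar hy.le).le)
  obtain ⟨B, hB0, hB⟩ := exists_bumpErr_bound χ hχ
  have IB : Integrable fun y => (ball (0 : Plane) ρ).indicator v y * bumpErr χ δ (z - y) :=
    hVi.mul_bdd (c := B) ((continuous_bumpErr χ hδ.ne').comp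
      (continuous_const.sub continuous_id)).aestronglyMeasurable
      (ae_of_all _ fun y => hB δ hδ.le hδ2 _)
  have IA : Integrable fun y => 2 * δ ^ 2 / (‖z - y‖ ^ 2 + δ ^ 2) ^ 2 *
      ((ball (0 : Plane) ρ).indicator v y * χ (z - y)) := by
    have hpos (y : Plane) : 0 < ‖z - y‖ ^ 2 + δ ^ 2 := by positivity
    refine (integrable_mul_bump χ hVi z).bdd_mul (c := 2 * δ ^ 2 / (δ ^ 2) ^ 2) ?_
      (ae_of_all _ fun y => ?_)
    · refine (continuous_const.div (by fun_prop) fun y => ?_).aestronglyMeasurable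
      exact (pow_pos (hpos y) 2).ne'
    · rw [Real.norm_of_nonneg (by positivity)]
      gcongr
      nlinarith [sq_nonneg ‖z - y‖]
  have e1 : ∀ y, v y * -lap (fun y => bumpPot χ δ (z - y)) y =
      2 * δ ^ 2 / (‖z - y‖ ^ 2 + δ ^ 2) ^ 2 * ((ball (0 : Plane) ρ).indicator v y * χ (z - y)) -
        (ball (0 : Plane) ρ).indicator v y * bumpErr χ δ (z - y) := by
    intro y
    rw [lap_comp_sub_left, lap_bumpPot χ (normSq_add_pos_right hδ.ne' _)]
    rcases lt_or_ge ‖y‖ ρ with h1 | h1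
    · rw [Set.indicator_of_mem (by simpa using h1)]; ring
    · rw [Set.indicator_of_notMem (by simpa using h1), bump_apply_eq_zero χ (hfar h1).le,
        bumpErr_eq_zero χ δ (Or.inr (hfar h1))]
      ring
  have e2 : ∫ y, bumpPot χ δ (z - y) * -lap v y = ∫ y, source ρ v y * bumpPot χ δ (z - y) := by
    refine integral_congr_ae ?_
    filter_upwards [ae_ne_zero] with y hy
    rcases lt_or_ge ‖y‖ ρ with h1 | h1
    · rw [source_eq hy h1, mul_comm]
    · rw [source_eq_zero h1, bumpPot_eq_zero χ δ (hfar h1).le]; ring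
  simp only [e1] at key
  rw [integral_sub IA IB, e2, sub_zero] at key
  linarith

/-- Representation of a positive superharmonic function near an isolated singularity as the sum of
a `C¹` function, a logarithmic potential and a multiple of the fundamental solution. -/
theorem exists_representation {χ : ContDiffBump (0 : Plane)} (h : PosSuperharmonic R v)
    (hρR : χ.rIn + χ.rOut < R) (hχ : χ.rOut ≤ 1 / 2) :
    ∃ (M : ℝ) (H : Plane → ℝ), ContDiff ℝ 1 H ∧ ∀ z : Plane, z ≠ 0 → ‖z‖ < χ.rIn →
      potMass * v z = H z + (∫ y, source (χ.rIn + χ.rOut) v y * bumpPot χ 0 (z - y)) +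
        M * logPot 0 z := by
  have hρ1 : χ.rIn + χ.rOut < 1 := by linarith [χ.rIn_lt_rOut]
  have hρ0 : 0 < χ.rIn + χ.rOut := add_pos χ.rIn_pos χ.rOut_pos
  obtain ⟨M, hM⟩ := exists_integral_mul_lap h hρ0 hρR hρ1
  have reg := fun {z : Plane} (hz : ‖z‖ < χ.rIn) {δ : ℝ} (hδ : 0 < δ) (hδ2 : δ ≤ 1 / 2) =>
    representation_regularized h hρR hρ1 hM hz hδ hδ2 hχ
  set ρ := χ.rIn + χ.rOut with hρ
  have hVi : Integrable ((ball (0 : Plane) ρ).indicator v) :=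
    (integrable_indicator_iff measurableSet_ball).2 (h.integrableOn hρR hρ1)
  refine ⟨M, fun z => ∫ y, (ball (0 : Plane) ρ).indicator v y * bumpErr χ 0 (z - y), ?_,
    fun z hz hza => ?_⟩
  · exact (bumpErr_hasCompactSupport χ 0).contDiff_convolution_right (n := 1)
      (ContinuousLinearMap.mul ℝ ℝ) hVi.locallyIntegrable (bumpErr_zero_contDiff χ)
  have hzR : z ∈ pdisk R := ⟨norm_pos_iff.2 hz, by linarith [χ.rOut_pos]⟩
  let u : ℕ → ℝ := fun n => 1 / ((n : ℝ) + 2)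
  have hu0 (n : ℕ) : 0 < u n := by positivity
  have hu2 (n : ℕ) : u n ≤ 1 / 2 :=
    one_div_le_one_div_of_le (by norm_num) (by linarith [Nat.cast_nonneg (α := ℝ) n])
  have hu : Tendsto u atTop (nhds 0) :=
    tendsto_const_nhds.div_atTop (tendsto_atTop_add_const_right _ _ tendsto_natCast_atTop_atTop)
  obtain ⟨B, hB0, hB⟩ := exists_bumpErr_bound χ hχ
  have L0 : Tendsto (fun n => ∫ y, 2 * u n ^ 2 / (‖z - y‖ ^ 2 + u n ^ 2) ^ 2 *
      ((ball (0 : Plane) ρ).indicator v y * χ (z - y))) atTop (nhds (potMass * v z)) := by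
    have hc : ContinuousAt (fun y => (ball (0 : Plane) ρ).indicator v y * χ (z - y)) z := by
      refine ContinuousAt.mul ?_ (χ.continuous.comp (by fun_prop)).continuousAt
      have : (ball (0 : Plane) ρ).indicator v =ᶠ[nhds z] v := by
        filter_upwards [isOpen_ball.mem_nhds (by simp; linarith [χ.rOut_pos] :
          z ∈ ball (0 : Plane) ρ)] with y hy using Set.indicator_of_mem hy _
      exact (h.1.continuousOn.continuousAt ((isOpen_pdisk R).mem_nhds hzR)).congr this.symm
    have := tendsto_integral_lap_logPot (integrable_mul_bump χ hVi z) hc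
    rwa [Set.indicator_of_mem (by simp; linarith [χ.rOut_pos]), sub_self,
      bump_apply_eq_one χ (by simpa using χ.rIn_pos.le), mul_one] at this
  have L1 : Tendsto (fun n => ∫ y, (ball (0 : Plane) ρ).indicator v y * bumpErr χ (u n) (z - y))
      atTop (nhds (∫ y, (ball (0 : Plane) ρ).indicator v y * bumpErr χ 0 (z - y))) := by
    refine tendsto_integral_of_dominated_convergence
      (fun y => ‖(ball (0 : Plane) ρ).indicator v y‖ * B)
      (fun n => hVi.aestronglyMeasurable.mul ((continuous_bumpErr χ (hu0 n).ne').comp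
        (continuous_const.sub continuous_id)).aestronglyMeasurable) (hVi.norm.mul_const B)
      (fun n => ae_of_all _ fun y => ?_) ?_
    · rw [norm_mul]
      gcongr
      exact hB _ (hu0 n).le (hu2 n) _
    · filter_upwards [ae_ne z] with y hy
      have hx : z - y ≠ 0 := sub_ne_zero.2 hy.symm
      exact (((tendsto_logPot hx hu).mul_const _).add
        ((tendsto_gdot_logPot χ hx hu).const_mul 2)).const_mul _
  have L2 : Tendsto (fun n => ∫ y, source ρ v y * bumpPot χ (u n) (z - y))
      atTop (nhds (∫ y, source ρ v y * bumpPot χ 0 (z - y))) := by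
    obtain ⟨s, Λ, hs0, hs1, hs⟩ := source_le_of_ball h.1 hz hρR
    have hF := source_nonneg h hρR
    have hFi := source_integrable h hρR hρ1
    refine tendsto_integral_of_dominated_convergence
      (fun y => source ρ v y * bumpPot χ 0 (z - y))
      (fun n => hFi.aestronglyMeasurable.mul ((measurable_bumpPot χ _).comp
        (measurable_const.sub measurable_id)).aestronglyMeasurable)
      (integrable_mul_bumpPot hχ hFi hF hs0 hs1 hs) (fun n => ?_) ?_
    · filter_upwards [ae_ne z] with y hy
      have hx : z - y ≠ 0 := sub_ne_zero.2 hy.symm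
      rw [Real.norm_of_nonneg
        (mul_nonneg (hF y) (bumpPot_nonneg hχ (hu0 n).le (hu2 n) _))]
      exact mul_le_mul_of_nonneg_left (bumpPot_le_zero_left _ hx) (hF y)
    · filter_upwards [ae_ne z] with y hy
      exact ((tendsto_logPot (sub_ne_zero.2 hy.symm) hu).const_mul _).const_mul _
  have L3 : Tendsto (fun n => M * bumpPot χ (u n) z) atTop (nhds (M * logPot 0 z)) := by
    simp only [bumpPot_eq_logPot χ _ hza.le]
    exact (tendsto_logPot hz hu).const_mul M
  exact tendsto_nhds_unique (L0.congr fun n => reg hza (hu0 n) (hu2 n)) ((L1.add L2).add L3)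

end Representation

lemma setIntegral_norm_inv_ball {s : ℝ} (hs : 0 < s) :
    ∫ x in ball (0 : Plane) s, ‖x‖⁻¹ = s * ∫ x in ball (0 : Plane) 1, ‖x‖⁻¹ := by
  have h := Measure.setIntegral_comp_smul_of_pos (volume : Measure Plane) (fun x => ‖x‖⁻¹)
    (ball 0 1) hs
  rw [smul_unitBall_of_pos hs] at h
  simp only [norm_smul, Real.norm_of_nonneg hs.le, mul_inv, finrank_euclideanSpace,
    Fintype.card_fin, smul_eq_mul, integral_const_mul] at h
  calc _ = s ^ 2 * ((s ^ 2)⁻¹ * ∫ x in ball (0 : Plane) s, ‖x‖⁻¹) := by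
        rw [mul_inv_cancel_left₀ (by positivity)]
    _ = s * (s * s⁻¹) * ∫ x in ball (0 : Plane) 1, ‖x‖⁻¹ := by rw [← h]; ring
    _ = _ := by rw [mul_inv_cancel₀ hs.ne', mul_one]

lemma integral_mul_bumpPot_le {χ : ContDiffBump (0 : Plane)} (hχ : χ.rOut ≤ 1 / 2)
    {F : Plane → ℝ} (hFi : Integrable F) (hF : ∀ y, 0 ≤ F y) {η s Λ : ℝ} (hη0 : 0 < η)
    (hη1 : η ≤ 1) (hs0 : 0 < s) (hs1 : s ≤ 1) {z : Plane} (hz : ‖z‖ ≤ η / 2)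
    (hΛ0 : 0 ≤ Λ) (hΛ : ∀ y ∈ ball z s, F y ≤ Λ) :
    ∫ y, F y * bumpPot χ 0 (z - y) ≤ Λ * (s * ∫ x in ball (0 : Plane) 1, ‖x‖⁻¹) +
      Real.log (1 / s) * (∫ y in ball (0 : Plane) η, F y) + Real.log (2 / η) * ∫ y, F y := by
  have I1 := ((integrable_indicator_norm_inv s).comp_sub_left z).const_mul Λ
  have I2 : Integrable ((ball (0 : Plane) η).indicator F) :=
    (integrable_indicator_iff measurableSet_ball).2 hFi.integrableOn
  have I2' := I2.const_mul (Real.log (1 / s))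
  have I3 := hFi.const_mul (Real.log (2 / η))
  have hlη : 0 ≤ Real.log (2 / η) := Real.log_nonneg ((one_le_div hη0).2 (by linarith))
  have hls : 0 ≤ Real.log (1 / s) := Real.log_nonneg ((one_le_div hs0).2 hs1)
  calc ∫ y, F y * bumpPot χ 0 (z - y)
      ≤ ∫ y, (Λ * (ball (0 : Plane) s).indicator (fun x => ‖x‖⁻¹) (z - y) +
          Real.log (1 / s) * (ball (0 : Plane) η).indicator F y) + Real.log (2 / η) * F y := by
        refine integral_mono_of_nonneg (ae_of_all _ fun y => mul_nonneg (hF y)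
          (bumpPot_nonneg hχ le_rfl (by norm_num) _)) ((I1.add I2').add I3) ?_
        filter_upwards [ae_ne z] with y hy
        rcases lt_or_ge ‖y‖ η with h | h
        · rw [Set.indicator_of_mem (s := ball (0 : Plane) η) (f := F) (by simpa using h)]
          exact (mul_bumpPot_le hχ hF hs0 hs1 hy (hΛ y)).trans
            (le_add_of_nonneg_right (mul_nonneg hlη (hF y)))
        · have h1 : η / 2 ≤ ‖z - y‖ := by
            have := norm_sub_norm_le y z
            rw [norm_sub_rev] at this; linarith
          have h2 := bumpPot_zero_le_log hχ (half_pos hη0) (by linarith) h1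
          rw [one_div_div] at h2
          rw [Set.indicator_of_notMem (s := ball (0 : Plane) η) (f := F) (by simpa using h),
            mul_zero, add_zero]
          have h3 : 0 ≤ (ball (0 : Plane) s).indicator (fun x => ‖x‖⁻¹) (z - y) :=
            Set.indicator_nonneg (fun _ _ => by positivity) _
          nlinarith [mul_le_mul_of_nonneg_right h2 (hF y), mul_nonneg hΛ0 h3]
    _ = _ := by
        have e1 := integral_add (I1.add I2') I3
        have e2 := integral_add I1 I2'
        simp only [Pi.add_apply] at e1 e2
        rw [e1, e2, integral_const_mul,
          integral_const_mul, integral_const_mul, integral_indicator measurableSet_ball,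
          integral_sub_left_eq_self ((ball (0 : Plane) s).indicator fun x => ‖x‖⁻¹) volume z,
          integral_indicator measurableSet_ball, setIntegral_norm_inv_ball hs0]

lemma exists_setIntegral_ball_le {F : Plane → ℝ} (hFi : Integrable F) {ε : ℝ} (hε : 0 < ε) :
    ∃ η : ℝ, 0 < η ∧ η ≤ 1 ∧ ∫ y in ball (0 : Plane) η, F y ≤ ε := by
  have h := tendsto_setIntegral_of_antitone (μ := (volume : Measure Plane)) (f := F)
    (s := fun n : ℕ => ball (0 : Plane) (1 / ((n : ℝ) + 1))) (fun _ => measurableSet_ball)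
    (fun m n hmn => ball_subset_ball (by gcongr)) ⟨0, hFi.integrableOn⟩
  have h0 : ∫ y in ⋂ n : ℕ, ball (0 : Plane) (1 / ((n : ℝ) + 1)), F y = 0 := by
    have : (⋂ n : ℕ, ball (0 : Plane) (1 / ((n : ℝ) + 1))) = {0} := by
      refine Set.Subset.antisymm (fun y hy => ?_) (fun y hy => ?_)
      · by_contra hne
        obtain ⟨n, hn⟩ := exists_nat_one_div_lt (norm_pos_iff.2 hne)
        have := Set.mem_iInter.1 hy n
        rw [mem_ball_zero_iff] at this
        linarith
      · rw [Set.mem_singleton_iff.1 hy]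
        exact Set.mem_iInter.2 fun n => mem_ball_self (by positivity)
    rw [this]; simp
  rw [h0] at h
  obtain ⟨n, hn⟩ := (h.eventually (gt_mem_nhds hε)).exists
  refine ⟨1 / ((n : ℝ) + 1), by positivity, ?_, hn.le⟩
  rw [div_le_one (by positivity)]; linarith [Nat.cast_nonneg (α := ℝ) n]

/-- Near every point of the punctured disk there is a point at which `v` is almost maximal on a
whole ball. -/
lemma exists_almost_max {r : ℝ} (hr : 0 < r) {v : Plane → ℝ} {z : Plane}
    (hv : ContinuousOn v (closedBall z r)) :
    ∃ (z₁ : Plane) (d : ℝ), 0 < d ∧ d + ‖z₁ - z‖ = r ∧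
      Real.exp (v z) * r ≤ Real.exp (v z₁) * d ∧
      ∀ y ∈ ball z₁ (d / 2), Real.exp (v y) ≤ 2 * Real.exp (v z₁) := by
  obtain ⟨z₁, hz₁, hmax⟩ := (isCompact_closedBall z r).exists_isMaxOn
    ⟨z, mem_closedBall_self hr.le⟩
    (hv.rexp.mul (by fun_prop : ContinuousOn (fun y => r - ‖y - z‖) (closedBall z r)))
  have h0 : Real.exp (v z) * (r - ‖z - z‖) ≤ Real.exp (v z₁) * (r - ‖z₁ - z‖) :=
    hmax (mem_closedBall_self hr.le)
  simp only [sub_self, norm_zero, sub_zero] at h0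
  have hd : 0 < r - ‖z₁ - z‖ := by
    have h1 := (mul_pos (Real.exp_pos (v z)) hr).trans_le h0
    exact pos_of_mul_pos_right h1 (Real.exp_pos _).le
  refine ⟨z₁, r - ‖z₁ - z‖, hd, by simp, h0, fun y hy => ?_⟩
  have hy1 : ‖y - z₁‖ < (r - ‖z₁ - z‖) / 2 := by rw [← dist_eq_norm]; exact hy
  have hy2 : ‖y - z‖ ≤ ‖y - z₁‖ + ‖z₁ - z‖ := by
    simpa using norm_add_le (y - z₁) (z₁ - z)
  have h2 : Real.exp (v y) * (r - ‖y - z‖) ≤ Real.exp (v z₁) * (r - ‖z₁ - z‖) :=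
    hmax (show y ∈ closedBall z r by rw [mem_closedBall, dist_eq_norm]; linarith)
  have h3 : Real.exp (v y) * ((r - ‖z₁ - z‖) / 2) ≤ Real.exp (v z₁) * (r - ‖z₁ - z‖) :=
    (mul_le_mul_of_nonneg_left (by linarith) (Real.exp_pos _).le).trans h2
  nlinarith [h3, hd]

lemma logPot_zero_eq (x : Plane) : logPot 0 x = -Real.log ‖x‖ := by
  rw [logPot, zero_pow two_ne_zero, add_zero, Real.log_pow]; push_cast; ring

section Growth

variable {R C M : ℝ} {v H : Plane → ℝ} {χ : ContDiffBump (0 : Plane)}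

lemma exists_growth_bound (h : PosSuperharmonic R v) (hρR : χ.rIn + χ.rOut < R)
    (hχ : χ.rOut ≤ 1 / 2) (hC : 0 < C) (hv : ∀ y ∈ pdisk R, -lap v y ≤ C * Real.exp (2 * v y))
    (hH : Continuous H)
    (hrep : ∀ z : Plane, z ≠ 0 → ‖z‖ < χ.rIn → potMass * v z = H z +
      (∫ y, source (χ.rIn + χ.rOut) v y * bumpPot χ 0 (z - y)) + M * logPot 0 z)
    {ε : ℝ} (hε : 0 < ε) (hεκ : 3 * ε ≤ potMass) :
    ∃ B r₀ : ℝ, 0 < r₀ ∧ r₀ ≤ χ.rIn ∧ ∀ z : Plane, z ≠ 0 → ‖z‖ < r₀ →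
      (potMass - 2 * ε) * v z ≤ B + (M + ε) * logPot 0 z := by
  have hρ1 : χ.rIn + χ.rOut < 1 := by linarith [χ.rIn_lt_rOut]
  have hF := source_nonneg h hρR
  have hFi := source_integrable h hρR hρ1
  obtain ⟨BH, hBH⟩ := (isCompact_closedBall (0 : Plane) χ.rIn).exists_bound_of_continuousOn
    hH.continuousOn
  obtain ⟨η, hη0, hη1, hη⟩ := exists_setIntegral_ball_le hFi hε
  have ha := χ.rIn_pos
  have hb := χ.rOut_pos
  set F := source (χ.rIn + χ.rOut) v with hFdef
  obtain ⟨c₁, hc₁⟩ : ∃ c : ℝ, ∫ x in ball (0 : Plane) 1, ‖x‖⁻¹ = c := ⟨_, rfl⟩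
  have hc₁0 : 0 ≤ c₁ := hc₁ ▸ integral_nonneg fun x => by positivity
  refine ⟨BH + 4 * C * c₁ + ε * (2 * Real.log 2) + Real.log (2 / η) * (∫ y, F y) +
    |M| * Real.log 2, min (η / 3) (χ.rIn / 2), by positivity,
    (min_le_right _ _).trans (by linarith), fun z hz hzr => ?_⟩
  have hz0 := norm_pos_iff.2 hz
  have hz1 : ‖z‖ < η / 3 := hzr.trans_le (min_le_left _ _)
  have hz2 : ‖z‖ < χ.rIn / 2 := hzr.trans_le (min_le_right _ _)
  have hnear {y : Plane} (hy : ‖y - z‖ ≤ ‖z‖ / 2) : ‖z‖ / 2 ≤ ‖y‖ ∧ ‖y‖ ≤ 3 * ‖z‖ / 2 := by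
    have h1 := norm_sub_norm_le z y
    have h2 := norm_sub_norm_le y z
    rw [norm_sub_rev] at h1
    exact ⟨by linarith, by linarith⟩
  have hpd {y : Plane} (hy : ‖y - z‖ ≤ ‖z‖ / 2) : y ∈ pdisk R :=
    ⟨by linarith [(hnear hy).1], by linarith [(hnear hy).2]⟩
  obtain ⟨z₁, d, hd, hdr, hmax, hball⟩ := exists_almost_max (half_pos hz0)
    (h.1.continuousOn.mono fun y hy => hpd (by rw [← dist_eq_norm]; exact hy))
  have hz₁ : ‖z₁ - z‖ ≤ ‖z‖ / 2 := by linarith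
  obtain ⟨hz₁l, hz₁u⟩ := hnear hz₁
  have hX0 : 0 ≤ v z₁ := h.2 z₁ (hpd hz₁)
  set X := v z₁ with hX
  have hd2 : d ≤ ‖z‖ / 2 := by linarith [norm_nonneg (z₁ - z)]
  set s := min (d / 2) (Real.exp (-(2 * X))) with hs
  have hs0 : 0 < s := lt_min (half_pos hd) (Real.exp_pos _)
  have hexp1 : Real.exp (-(2 * X)) ≤ 1 := Real.exp_le_one_iff.2 (by linarith)
  have hs1 : s ≤ 1 := (min_le_right _ _).trans hexp1
  have hΛ : ∀ y ∈ ball z₁ s, F y ≤ 4 * C * Real.exp (2 * X) := by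
    intro y hy
    have hy1 : y ∈ ball z₁ (d / 2) := ball_subset_ball (min_le_left _ _) hy
    have hy2 : ‖y - z‖ ≤ ‖z‖ / 2 := by
      have h1 : ‖y - z₁‖ < d / 2 := by rw [← dist_eq_norm]; exact hy1
      have h2 : ‖y - z‖ ≤ ‖y - z₁‖ + ‖z₁ - z‖ := by simpa using norm_add_le (y - z₁) (z₁ - z)
      linarith
    have hy3 := hpd hy2
    rw [hFdef, source_eq (norm_pos_iff.1 hy3.1) (by linarith [(hnear hy2).2])]
    refine (hv y hy3).trans ?_
    have h3 := pow_le_pow_left₀ (Real.exp_pos _).le (hball y hy1) 2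
    rw [mul_pow, ← Real.exp_nat_mul, ← Real.exp_nat_mul] at h3
    push_cast at h3
    nlinarith
  have key := integral_mul_bumpPot_le hχ hFi hF hη0 hη1 hs0 hs1 (z := z₁) (by linarith)
    (by positivity) hΛ
  rw [hc₁] at key
  have k1 : 4 * C * Real.exp (2 * X) * (s * c₁) ≤ 4 * C * c₁ := by
    have h1 : Real.exp (2 * X) * s ≤ 1 := by
      have h2 := mul_le_mul_of_nonneg_left (min_le_right (d / 2) (Real.exp (-(2 * X))))
        (Real.exp_pos (2 * X)).le
      rwa [← Real.exp_add, add_neg_cancel, Real.exp_zero] at h2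
    have h2 := mul_le_mul_of_nonneg_left h1 (by positivity : 0 ≤ 4 * C * c₁)
    linarith
  have k2 : Real.log (1 / s) ≤ 2 * X + Real.log 2 - Real.log d := by
    have h1 : d / 2 * Real.exp (-(2 * X)) ≤ s :=
      le_min (mul_le_of_le_one_right (by positivity) hexp1)
        (mul_le_of_le_one_left (Real.exp_pos _).le (by linarith))
    have h2 := Real.log_le_log (by positivity) h1
    rw [Real.log_mul (by positivity) (Real.exp_pos _).ne', Real.log_exp,
      Real.log_div hd.ne' two_ne_zero] at h2
    rw [one_div, Real.log_inv]; linarith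
  have k3 : Real.log (1 / s) * (∫ y in ball (0 : Plane) η, F y) ≤
      ε * (2 * X + Real.log 2 - Real.log d) := by
    rw [mul_comm ε]
    exact mul_le_mul k2 hη (setIntegral_nonneg measurableSet_ball fun y _ => hF y)
      ((Real.log_nonneg ((one_le_div hs0).2 hs1)).trans k2)
  have k4 : M * logPot 0 z₁ ≤ M * logPot 0 z + |M| * Real.log 2 := by
    rw [logPot_zero_eq, logPot_zero_eq]
    have h1 : |Real.log ‖z‖ - Real.log ‖z₁‖| ≤ Real.log 2 := by
      rw [abs_le]
      constructor
      · have := Real.log_le_log (by linarith) (by linarith : ‖z₁‖ ≤ 2 * ‖z‖)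
        rw [Real.log_mul two_ne_zero hz0.ne'] at this; linarith
      · have := Real.log_le_log hz0 (by linarith : ‖z‖ ≤ 2 * ‖z₁‖)
        rw [Real.log_mul two_ne_zero (by linarith)] at this; linarith
    have h2 : M * (Real.log ‖z‖ - Real.log ‖z₁‖) ≤ |M| * Real.log 2 := by
      refine (le_abs_self _).trans ?_
      rw [abs_mul]; gcongr
    linarith
  have k5 := hrep z₁ (norm_pos_iff.1 (by linarith)) (by linarith)
  have k6 : H z₁ ≤ BH :=
    (le_abs_self _).trans (hBH z₁ (by rw [mem_closedBall_zero_iff]; linarith))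
  have k7 : v z ≤ X + (Real.log d - (Real.log ‖z‖ - Real.log 2)) := by
    have := Real.log_le_log (by positivity) hmax
    rw [Real.log_mul (Real.exp_pos _).ne' (by positivity), Real.log_exp,
      Real.log_mul (Real.exp_pos _).ne' hd.ne', Real.log_exp,
      Real.log_div hz0.ne' two_ne_zero] at this
    linarith
  have k8 : Real.log d - (Real.log ‖z‖ - Real.log 2) ≤ 0 := by
    have := Real.log_le_log hd hd2
    rw [Real.log_div hz0.ne' two_ne_zero] at this
    linarith
  have k9 : logPot 0 z = -Real.log ‖z‖ := logPot_zero_eq z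
  have k10 := mul_le_mul_of_nonneg_left k7 (by linarith : 0 ≤ potMass - 2 * ε)
  have k11 := mul_nonneg_of_nonpos_of_nonpos k8 (by linarith : 3 * ε - potMass ≤ 0)
  rw [← hX] at k5
  rw [k9] at k4 ⊢
  linarith

end Growth

lemma tendsto_div_of_linear_bounds {α : Type*} {l : Filter α} {u L : α → ℝ} {κ M B : ℝ}
    (hL : Tendsto L l atTop) (hκ : 0 < κ) (hlow : ∀ᶠ x in l, -B + M * L x ≤ κ * u x)
    (hup : ∀ ε : ℝ, 0 < ε → 3 * ε ≤ κ →
      ∃ B' : ℝ, ∀ᶠ x in l, (κ - 2 * ε) * u x ≤ B' + (M + ε) * L x) :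
    Tendsto (fun x => u x / L x) l (nhds (M / κ)) := by
  have hdiv (B m k : ℝ) : Tendsto (fun x => (B / L x + m) / k) l (nhds (m / k)) := by
    have := ((hL.const_div_atTop B).add_const m).div_const k
    rwa [zero_add] at this
  refine tendsto_order.2 ⟨fun b hb => ?_, fun b hb => ?_⟩
  · filter_upwards [hlow, hL.eventually_gt_atTop 0, (hdiv (-B) M κ).eventually (lt_mem_nhds hb)]
      with x h1 h2 h3
    refine h3.trans_le ?_
    rw [div_le_div_iff₀ hκ h2, add_mul, div_mul_cancel₀ _ h2.ne']
    linarith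
  · have hc : ContinuousAt (fun ε : ℝ => (M + ε) / (κ - 2 * ε)) 0 :=
      ContinuousAt.div (by fun_prop) (by fun_prop) (by simpa using hκ.ne')
    have hb' : (M + 0) / (κ - 2 * 0) < b := by simpa using hb
    have h1 := (hc.eventually (gt_mem_nhds hb')).filter_mono
      (nhdsWithin_le_nhds (s := Set.Ioi 0))
    obtain ⟨ε, ⟨hε1, hε2⟩, hε0⟩ := ((h1.and ((gt_mem_nhds (by positivity : 0 < κ / 3)).filter_mono
      nhdsWithin_le_nhds)).and self_mem_nhdsWithin).exists
    have hε0' : 0 < ε := hε0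
    obtain ⟨B', hB'⟩ := hup ε hε0' (by linarith)
    have hk : 0 < κ - 2 * ε := by linarith
    filter_upwards [hB', hL.eventually_gt_atTop 0,
      (hdiv B' (M + ε) (κ - 2 * ε)).eventually (gt_mem_nhds hε1)] with x h1 h2 h3
    refine lt_of_le_of_lt ?_ h3
    rw [div_le_div_iff₀ h2 hk, add_mul, div_mul_cancel₀ _ h2.ne']
    linarith

lemma tendsto_logPot_zero : Tendsto (logPot 0) (nhdsWithin (0 : Plane) {0}ᶜ) atTop := by
  simp only [funext logPot_zero_eq]
  exact tendsto_neg_atBot_atTop.comp (Real.tendsto_log_nhdsGT_zero.comp tendsto_norm_nhdsNE_zero)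

lemma eventually_norm_lt {r : ℝ} (hr : 0 < r) :
    ∀ᶠ z in nhdsWithin (0 : Plane) {0}ᶜ, z ≠ 0 ∧ ‖z‖ < r := by
  filter_upwards [self_mem_nhdsWithin, nhdsWithin_le_nhds (ball_mem_nhds 0 hr)] with z hz hz2
  exact ⟨hz, by simpa using hz2⟩

section Growth

variable {R C M : ℝ} {v H : Plane → ℝ} {χ : ContDiffBump (0 : Plane)}

lemma tendsto_div_logPot (h : PosSuperharmonic R v) (hρR : χ.rIn + χ.rOut < R)
    (hχ : χ.rOut ≤ 1 / 2) (hC : 0 < C) (hv : ∀ y ∈ pdisk R, -lap v y ≤ C * Real.exp (2 * v y))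
    (hH : Continuous H)
    (hrep : ∀ z : Plane, z ≠ 0 → ‖z‖ < χ.rIn → potMass * v z = H z +
      (∫ y, source (χ.rIn + χ.rOut) v y * bumpPot χ 0 (z - y)) + M * logPot 0 z) :
    Tendsto (fun z => v z / logPot 0 z) (nhdsWithin 0 {0}ᶜ) (nhds (M / potMass)) := by
  obtain ⟨BH, hBH⟩ := (isCompact_closedBall (0 : Plane) χ.rIn).exists_bound_of_continuousOn
    hH.continuousOn
  refine tendsto_div_of_linear_bounds (B := BH) tendsto_logPot_zero potMass_pos ?_
    fun ε hε hεκ => ?_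
  · filter_upwards [eventually_norm_lt χ.rIn_pos] with z hz
    have h1 : -BH ≤ H z :=
      (abs_le.1 (hBH z (by rw [mem_closedBall_zero_iff]; exact hz.2.le))).1
    have h2 : 0 ≤ ∫ y, source (χ.rIn + χ.rOut) v y * bumpPot χ 0 (z - y) :=
      integral_nonneg fun y => mul_nonneg (source_nonneg h hρR y)
        (bumpPot_nonneg hχ le_rfl (by norm_num) _)
    rw [hrep z hz.1 hz.2]
    linarith
  · obtain ⟨B, r₀, hr0, -, hB⟩ := exists_growth_bound h hρR hχ hC hv hH hrep hε hεκ
    refine ⟨B, ?_⟩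
    filter_upwards [eventually_norm_lt hr0] with z hz using hB z hz.1 hz.2

/-- If the singular part vanishes, the source has a weak singularity at the origin. -/
lemma exists_source_le (h : PosSuperharmonic R v) (hρR : χ.rIn + χ.rOut < R)
    (hχ : χ.rOut ≤ 1 / 2) (hC : 0 < C) (hv : ∀ y ∈ pdisk R, -lap v y ≤ C * Real.exp (2 * v y))
    (hH : Continuous H)
    (hrep : ∀ z : Plane, z ≠ 0 → ‖z‖ < χ.rIn → potMass * v z = H z +
      (∫ y, source (χ.rIn + χ.rOut) v y * bumpPot χ 0 (z - y)) + 0 * logPot 0 z) :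
    ∃ A : ℝ, 0 ≤ A ∧ ∀ y, y ≠ 0 →
      source (χ.rIn + χ.rOut) v y ≤ A * ‖y‖ ^ (-(1 / 2) : ℝ) := by
  have hκ := potMass_pos
  obtain ⟨B, r₀, hr0, hra, hB⟩ := exists_growth_bound h hρR hχ hC hv hH hrep
    (ε := potMass / 10) (by linarith) (by linarith)
  obtain ⟨V, hV0, hV⟩ := continuousOn_annulus_bound (lap_continuousOn (isOpen_pdisk R) h.1) hr0 hρR
  refine ⟨C * Real.exp (B * (5 / 2) / potMass) + V, by positivity, fun y hy => ?_⟩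
  have hy0 := norm_pos_iff.2 hy
  have hρ1 : χ.rIn + χ.rOut < 1 := by linarith [χ.rIn_lt_rOut]
  rcases le_or_gt (χ.rIn + χ.rOut) ‖y‖ with h1 | h1
  · rw [source_eq_zero h1]; positivity
  rw [source_eq hy h1]
  have hb := χ.rOut_pos
  rcases lt_or_ge ‖y‖ r₀ with h2 | h2
  · have h3 := hB y hy h2
    rw [logPot_zero_eq] at h3
    have h4 : 2 * v y ≤ B * (5 / 2) / potMass + Real.log ‖y‖ * (-(1 / 2)) := by
      have hlog : Real.log ‖y‖ ≤ 0 := Real.log_nonpos hy0.le (by linarith)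
      have h5 : 8 / 10 * (2 * v y) ≤ 2 * (B / potMass) - 2 / 10 * Real.log ‖y‖ := by
        have h6 := div_le_div_of_nonneg_right h3 hκ.le
        have e1 : (potMass - 2 * (potMass / 10)) * v y / potMass = 8 / 10 * v y := by
          field_simp; ring
        have e2 : (B + (0 + potMass / 10) * -Real.log ‖y‖) / potMass =
            B / potMass - Real.log ‖y‖ / 10 := by field_simp; ring
        rw [e1, e2] at h6
        linarith
      have : B * (5 / 2) / potMass = 5 / 2 * (B / potMass) := by ring
      rw [this]; linarith
    calc -lap v y ≤ C * Real.exp (2 * v y) := hv y ⟨hy0, by linarith⟩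
      _ ≤ C * Real.exp (B * (5 / 2) / potMass + Real.log ‖y‖ * (-(1 / 2))) := by gcongr
      _ = C * Real.exp (B * (5 / 2) / potMass) * ‖y‖ ^ (-(1 / 2) : ℝ) := by
        rw [Real.exp_add, Real.rpow_def_of_pos hy0, mul_assoc]
      _ ≤ _ := by gcongr; linarith
  · have h3 : 1 ≤ ‖y‖ ^ (-(1 / 2) : ℝ) :=
      Real.one_le_rpow_of_pos_of_le_one_of_nonpos hy0 (by linarith) (by norm_num)
    calc -lap v y ≤ V := (neg_le_abs _).trans (hV y h2 h1.le)
      _ ≤ V * ‖y‖ ^ (-(1 / 2) : ℝ) := le_mul_of_one_le_right hV0 h3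
      _ ≤ _ := by gcongr; exact le_add_of_nonneg_left (by positivity)

end Growth

section Kernel

variable (χ : ContDiffBump (0 : Plane))

lemma fderiv_bumpPot {δ : ℝ} {x : Plane} (h : 0 < ‖x‖ ^ 2 + δ ^ 2) :
    fderiv ℝ (bumpPot χ δ) x =
      χ x • (-((‖x‖ ^ 2 + δ ^ 2)⁻¹ • innerSL ℝ x)) + logPot δ x • fderiv ℝ χ x :=
  (((bump_contDiff χ (n := 1)).differentiable (by norm_num) x).hasFDerivAt.mul
    (logPot_hasFDerivAt h)).fderiv

lemma sq_div_le_rpow {t : ℝ} (ht : 0 < t) : t ^ 2 / (1 + t ^ 2) ≤ t ^ (1 / 4 : ℝ) := by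
  rw [div_le_iff₀ (by positivity)]
  have h0 : 0 < t ^ (1 / 4 : ℝ) := by positivity
  rcases le_total t 1 with h | h
  · have h1 : t ^ 2 ≤ t ^ (1 / 4 : ℝ) := by
      rw [← Real.rpow_natCast]
      exact Real.rpow_le_rpow_of_exponent_ge ht h (by norm_num)
    nlinarith [mul_nonneg h0.le (sq_nonneg t)]
  · have h1 : 1 ≤ t ^ (1 / 4 : ℝ) := Real.one_le_rpow h (by norm_num)
    nlinarith [mul_le_mul_of_nonneg_right h1 (sq_nonneg t)]

lemma sq_div_mul_le_rpow {δ r : ℝ} (hδ : 0 < δ) (hr : 0 < r) :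
    δ ^ 2 / (r * (r ^ 2 + δ ^ 2)) ≤ δ ^ (1 / 4 : ℝ) * r ^ (-(5 / 4) : ℝ) := by
  have h := mul_le_mul_of_nonneg_right (sq_div_le_rpow (div_pos hδ hr)) (inv_pos.2 hr).le
  have e1 : (δ / r) ^ 2 / (1 + (δ / r) ^ 2) * r⁻¹ = δ ^ 2 / (r * (r ^ 2 + δ ^ 2)) := by
    field_simp
  have e2 : (δ / r) ^ (1 / 4 : ℝ) * r⁻¹ = δ ^ (1 / 4 : ℝ) * r ^ (-(5 / 4) : ℝ) := by
    rw [Real.div_rpow hδ.le hr.le, div_eq_mul_inv, ← Real.rpow_neg hr.le, ← Real.rpow_neg_one r,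
      mul_assoc, ← Real.rpow_add hr]
    norm_num
  rwa [e1, e2] at h

lemma logPot_zero_sub_le {δ : ℝ} {x : Plane} (hx : x ≠ 0) :
    logPot 0 x - logPot δ x ≤ δ ^ 2 / ‖x‖ ^ 2 := by
  have hx0 := norm_pos_iff.2 hx
  have e : logPot 0 x - logPot δ x = 1 / 2 * Real.log (1 + δ ^ 2 / ‖x‖ ^ 2) := by
    have : 1 + δ ^ 2 / ‖x‖ ^ 2 = (‖x‖ ^ 2 + δ ^ 2) / ‖x‖ ^ 2 := by field_simp
    rw [this, Real.log_div (by positivity) (by positivity), logPot, logPot,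
      zero_pow two_ne_zero, add_zero]
    ring
  have h1 := Real.log_le_sub_one_of_pos (by positivity : 0 < 1 + δ ^ 2 / ‖x‖ ^ 2)
  have h2 : 0 ≤ δ ^ 2 / ‖x‖ ^ 2 := by positivity
  rw [e]; linarith

lemma exists_fderiv_bumpPot_sub_le : ∃ D : ℝ, 0 ≤ D ∧ ∀ δ : ℝ, 0 < δ → δ ≤ 1 → ∀ x : Plane,
    x ≠ 0 → ‖fderiv ℝ (bumpPot χ δ) x - fderiv ℝ (bumpPot χ 0) x‖ ≤
      δ ^ (1 / 4 : ℝ) * (‖x‖ ^ (-(5 / 4) : ℝ) + D) := by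
  obtain ⟨B, hB⟩ := (χ.hasCompactSupport.fderiv ℝ).exists_bound_of_continuous
    ((bump_contDiff χ (n := 1)).continuous_fderiv (by norm_num))
  have hB0 : 0 ≤ B := (norm_nonneg _).trans (hB 0)
  refine ⟨B / χ.rIn ^ 2, by positivity, fun δ hδ hδ1 x hx => ?_⟩
  have hx0 := norm_pos_iff.2 hx
  have ha := χ.rIn_pos
  rw [fderiv_bumpPot χ (normSq_add_pos_right hδ.ne' x), fderiv_bumpPot χ (normSq_add_pos_left hx)]
  have e : χ x • (-((‖x‖ ^ 2 + δ ^ 2)⁻¹ • innerSL ℝ x)) + logPot δ x • fderiv ℝ χ x -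
      (χ x • (-((‖x‖ ^ 2 + 0 ^ 2)⁻¹ • innerSL ℝ x)) + logPot 0 x • fderiv ℝ χ x) =
      (χ x * (δ ^ 2 / (‖x‖ ^ 2 * (‖x‖ ^ 2 + δ ^ 2)))) • innerSL ℝ x -
        (logPot 0 x - logPot δ x) • fderiv ℝ χ x := by
    have : δ ^ 2 / (‖x‖ ^ 2 * (‖x‖ ^ 2 + δ ^ 2)) = (‖x‖ ^ 2 + 0 ^ 2)⁻¹ - (‖x‖ ^ 2 + δ ^ 2)⁻¹ := by
      field_simp; ring
    rw [this]; module
  rw [e, mul_add (δ ^ (1 / 4 : ℝ))]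
  refine (norm_sub_le _ _).trans (add_le_add ?_ ?_)
  · rw [norm_smul, innerSL_apply_norm, Real.norm_of_nonneg (mul_nonneg χ.nonneg (by positivity))]
    refine le_trans ?_ (sq_div_mul_le_rpow hδ hx0)
    calc χ x * (δ ^ 2 / (‖x‖ ^ 2 * (‖x‖ ^ 2 + δ ^ 2))) * ‖x‖
        ≤ 1 * (δ ^ 2 / (‖x‖ ^ 2 * (‖x‖ ^ 2 + δ ^ 2))) * ‖x‖ := by gcongr; exact χ.le_one
      _ = _ := by field_simp
  · rcases lt_or_ge ‖x‖ χ.rIn with h | h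
    · have h0 : fderiv ℝ χ x = 0 := by
        have : χ =ᶠ[nhds x] fun _ => (1 : ℝ) :=
          χ.eventuallyEq_one_of_mem_ball (by simpa using h)
        rw [this.fderiv_eq]; simp
      rw [h0, smul_zero, norm_zero]; positivity
    · have h1 := logPot_zero_sub_le (δ := δ) hx
      rw [norm_smul, Real.norm_of_nonneg (sub_nonneg.2 (logPot_le_zero_left δ hx))]
      have h2 : δ ^ 2 ≤ δ ^ (1 / 4 : ℝ) := by
        rw [← Real.rpow_natCast]
        exact Real.rpow_le_rpow_of_exponent_ge hδ hδ1 (by norm_num)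
      calc (logPot 0 x - logPot δ x) * ‖fderiv ℝ χ x‖ ≤ δ ^ 2 / ‖x‖ ^ 2 * B := by
            gcongr; exact hB x
        _ ≤ δ ^ (1 / 4 : ℝ) / χ.rIn ^ 2 * B := by gcongr
        _ = _ := by ring

end Kernel

/-- An integrable majorant, uniform in `z`, for products of weak singularities at `0` and `z`. -/
noncomputable def weight (z y : Plane) : ℝ :=
  (ball (0 : Plane) 2).indicator (fun x => ‖x‖ ^ (-(7 / 4) : ℝ)) y +
    (ball (0 : Plane) 2).indicator (fun x => ‖x‖ ^ (-(7 / 4) : ℝ)) (z - y)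

lemma integrable_indicator_rpow : Integrable
    ((ball (0 : Plane) 2).indicator fun x => ‖x‖ ^ (-(7 / 4) : ℝ)) :=
  (integrable_indicator_iff measurableSet_ball).2 (integrableOn_norm_rpow (by norm_num) 2)

lemma integrable_weight (z : Plane) : Integrable (weight z) :=
  integrable_indicator_rpow.add (integrable_indicator_rpow.comp_sub_left z)

lemma integral_weight (z : Plane) : ∫ y, weight z y =
    2 * ∫ y, (ball (0 : Plane) 2).indicator (fun x => ‖x‖ ^ (-(7 / 4) : ℝ)) y := by
  have h := integral_add integrable_indicator_rpow (integrable_indicator_rpow.comp_sub_left z)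
  rw [integral_sub_left_eq_self ((ball (0 : Plane) 2).indicator fun x => ‖x‖ ^ (-(7 / 4) : ℝ))
    volume z] at h
  rw [two_mul, ← h]
  rfl

lemma weight_nonneg (z y : Plane) : 0 ≤ weight z y :=
  add_nonneg (Set.indicator_nonneg (fun _ _ => by positivity) _)
    (Set.indicator_nonneg (fun _ _ => by positivity) _)

lemma rpow_mul_rpow_le {s t : ℝ} (hs : 0 < s) (ht : 0 < t) :
    t ^ (-(1 / 2) : ℝ) * s ^ (-(5 / 4) : ℝ) ≤ t ^ (-(7 / 4) : ℝ) + s ^ (-(7 / 4) : ℝ) := by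
  have key {a : ℝ} (ha : 0 < a) :
      a ^ (-(1 / 2) : ℝ) * a ^ (-(5 / 4) : ℝ) = a ^ (-(7 / 4) : ℝ) := by
    rw [← Real.rpow_add ha]; norm_num
  rcases le_total s t with h | h
  · refine le_add_of_nonneg_of_le (by positivity) ?_
    rw [← key hs]
    gcongr 1
    exact Real.rpow_le_rpow_of_nonpos hs h (by norm_num)
  · refine le_add_of_le_of_nonneg ?_ (by positivity)
    rw [← key ht]
    gcongr 1
    exact Real.rpow_le_rpow_of_nonpos ht h (by norm_num)

lemma mul_rpow_le_weight {F : Plane → ℝ} {ρ A : ℝ} (hρ : ρ ≤ 1) (hF0 : ∀ y, ρ ≤ ‖y‖ → F y = 0)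
    (hA0 : 0 ≤ A) (hA : ∀ y, y ≠ 0 → F y ≤ A * ‖y‖ ^ (-(1 / 2) : ℝ)) {z y : Plane}
    (hz : ‖z‖ < 1) (hy : y ≠ 0) (hyz : y ≠ z) :
    F y * ‖z - y‖ ^ (-(5 / 4) : ℝ) ≤ A * weight z y := by
  rcases le_or_gt ρ ‖y‖ with h | h
  · rw [hF0 y h, zero_mul]; exact mul_nonneg hA0 (weight_nonneg z y)
  · have h1 : ‖z - y‖ < 2 := (norm_sub_le z y).trans_lt (by linarith)
    have hw : weight z y = ‖y‖ ^ (-(7 / 4) : ℝ) + ‖z - y‖ ^ (-(7 / 4) : ℝ) := by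
      rw [weight, Set.indicator_of_mem (by rw [mem_ball_zero_iff]; linarith),
        Set.indicator_of_mem (by rwa [mem_ball_zero_iff])]
    have h2 := rpow_mul_rpow_le (norm_pos_iff.2 (sub_ne_zero.2 hyz.symm)) (norm_pos_iff.2 hy)
    rw [hw]
    calc _ ≤ A * ‖y‖ ^ (-(1 / 2) : ℝ) * ‖z - y‖ ^ (-(5 / 4) : ℝ) := by gcongr; exact hA y hy
      _ = A * (‖y‖ ^ (-(1 / 2) : ℝ) * ‖z - y‖ ^ (-(5 / 4) : ℝ)) := by ring
      _ ≤ _ := by gcongr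

section Potential

variable {χ : ContDiffBump (0 : Plane)} {F : Plane → ℝ} {ρ A : ℝ}

lemma hasFDerivAt_integral_bumpPot (hFi : Integrable F) {δ : ℝ} (hδ : δ ≠ 0) (z : Plane) :
    HasFDerivAt (fun z => ∫ y, F y * bumpPot χ δ (z - y))
      (∫ y, F y • fderiv ℝ (bumpPot χ δ) (z - y)) z := by
  have h := (bumpPot_hasCompactSupport χ δ).hasFDerivAt_convolution_right
    (ContinuousLinearMap.mul ℝ ℝ) hFi.locallyIntegrable (bumpPot_contDiff χ hδ (n := 1)) z
  refine h.congr_fderiv (integral_congr_ae (ae_of_all _ fun y => ?_))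
  ext w
  simp

lemma continuous_fderiv_bumpPot {δ : ℝ} (hδ : δ ≠ 0) :
    Continuous (fderiv ℝ (bumpPot χ δ)) :=
  (bumpPot_contDiff χ hδ (n := 1)).continuous_fderiv (by norm_num)

lemma integrable_smul_fderiv_bumpPot (hFi : Integrable F) {δ : ℝ} (hδ : δ ≠ 0) (z : Plane) :
    Integrable fun y => F y • fderiv ℝ (bumpPot χ δ) (z - y) := by
  obtain ⟨B, hB⟩ := ((bumpPot_hasCompactSupport χ δ).fderiv ℝ).exists_bound_of_continuous
    (continuous_fderiv_bumpPot hδ)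
  exact hFi.smul_bdd B ((continuous_fderiv_bumpPot hδ).comp
    (continuous_const.sub continuous_id)).aestronglyMeasurable (ae_of_all _ fun y => hB _)

lemma aestronglyMeasurable_smul_fderiv_bumpPot (hFi : Integrable F) (δ : ℝ) (z : Plane) :
    AEStronglyMeasurable (fun y => F y • fderiv ℝ (bumpPot χ δ) (z - y)) volume :=
  hFi.aestronglyMeasurable.smul ((measurable_fderiv ℝ (bumpPot χ δ)).comp
    (measurable_const.sub measurable_id)).aestronglyMeasurable

lemma integrable_mul_bumpPot_of_le (hχ : χ.rOut ≤ 1 / 2) (hFi : Integrable F)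
    (hF : ∀ y, 0 ≤ F y) (hρ : ρ ≤ 1) (hF0 : ∀ y, ρ ≤ ‖y‖ → F y = 0) (hA0 : 0 ≤ A)
    (hA : ∀ y, y ≠ 0 → F y ≤ A * ‖y‖ ^ (-(1 / 2) : ℝ)) {z : Plane} (hz : ‖z‖ < 1) :
    Integrable fun y => F y * bumpPot χ 0 (z - y) := by
  refine ((integrable_weight z).const_mul A).mono' (hFi.aestronglyMeasurable.mul
    ((measurable_bumpPot χ 0).comp (measurable_const.sub measurable_id)).aestronglyMeasurable) ?_
  filter_upwards [ae_ne z, ae_ne_zero] with y hy hy0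
  have hx := sub_ne_zero.2 hy.symm
  have hx0 := norm_pos_iff.2 hx
  rw [Real.norm_of_nonneg (mul_nonneg (hF y) (bumpPot_nonneg hχ le_rfl (by norm_num) _))]
  refine le_trans ?_ (mul_rpow_le_weight hρ hF0 hA0 hA hz hy0 hy)
  refine mul_le_mul_of_nonneg_left ?_ (hF y)
  rcases le_or_gt ‖z - y‖ 1 with h | h
  · refine (bumpPot_zero_le_inv hχ hx).trans ?_
    rw [← Real.rpow_neg_one]
    exact Real.rpow_le_rpow_of_exponent_ge hx0 h (by norm_num)
  · rw [bumpPot_eq_zero χ 0 (by linarith)]; positivity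

/-- The logarithmic potential of an integrable density with a weak singularity at the origin is
continuously differentiable. -/
theorem contDiffOn_integral_bumpPot (hχ : χ.rOut ≤ 1 / 2) (hFi : Integrable F)
    (hF : ∀ y, 0 ≤ F y) (hρ : ρ ≤ 1) (hF0 : ∀ y, ρ ≤ ‖y‖ → F y = 0) (hA0 : 0 ≤ A)
    (hA : ∀ y, y ≠ 0 → F y ≤ A * ‖y‖ ^ (-(1 / 2) : ℝ)) :
    ContDiffOn ℝ 1 (fun z => ∫ y, F y * bumpPot χ 0 (z - y)) (ball 0 1) := by
  obtain ⟨D, hD0, hD⟩ := exists_fderiv_bumpPot_sub_le χ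
  have hpt {δ : ℝ} (hδ : 0 < δ) (hδ1 : δ ≤ 1) {z y : Plane} (hz : ‖z‖ < 1) (hy : y ≠ z)
      (hy0 : y ≠ 0) : ‖F y • fderiv ℝ (bumpPot χ δ) (z - y) - F y • fderiv ℝ (bumpPot χ 0) (z - y)‖
        ≤ δ ^ (1 / 4 : ℝ) * (A * weight z y + D * F y) := by
    rw [← smul_sub, norm_smul, Real.norm_of_nonneg (hF y)]
    have h1 := mul_le_mul_of_nonneg_left (hD δ hδ hδ1 _ (sub_ne_zero.2 hy.symm)) (hF y)
    have h2 := mul_le_mul_of_nonneg_left (mul_rpow_le_weight hρ hF0 hA0 hA hz hy0 hy)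
      (by positivity : 0 ≤ δ ^ (1 / 4 : ℝ))
    refine h1.trans ?_
    linarith
  have Iw (z : Plane) : Integrable fun y => A * weight z y + D * F y :=
    ((integrable_weight z).const_mul A).add (hFi.const_mul D)
  have I0 {z : Plane} (hz : ‖z‖ < 1) :
      Integrable fun y => F y • fderiv ℝ (bumpPot χ 0) (z - y) := by
    have h1 : Integrable fun y => F y • fderiv ℝ (bumpPot χ 1) (z - y) -
        F y • fderiv ℝ (bumpPot χ 0) (z - y) := by
      refine ((Iw z).const_mul ((1 : ℝ) ^ (1 / 4 : ℝ))).mono'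
        ((aestronglyMeasurable_smul_fderiv_bumpPot hFi 1 z).sub
          (aestronglyMeasurable_smul_fderiv_bumpPot hFi 0 z)) ?_
      filter_upwards [ae_ne z, ae_ne_zero] with y hy hy0
      exact hpt one_pos le_rfl hz hy hy0
    refine ((integrable_smul_fderiv_bumpPot (χ := χ) hFi one_ne_zero z).sub h1).congr 
      (ae_of_all _ fun y => ?_)
    simp
  obtain ⟨J, hJ⟩ : ∃ J : ℝ, ∀ z, ∫ y, (A * weight z y + D * F y) = J := by
    refine ⟨A * (2 * ∫ y, (ball (0 : Plane) 2).indicator (fun x => ‖x‖ ^ (-(7 / 4) : ℝ)) y) +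
      D * ∫ y, F y, fun z => ?_⟩
    rw [integral_add ((integrable_weight z).const_mul A) (hFi.const_mul D), integral_const_mul,
      integral_const_mul, integral_weight]
  let u : ℕ → ℝ := fun n => 1 / ((n : ℝ) + 2)
  have hu0 (n : ℕ) : 0 < u n := by positivity
  have hu2 (n : ℕ) : u n ≤ 1 / 2 :=
    one_div_le_one_div_of_le (by norm_num) (by linarith [Nat.cast_nonneg (α := ℝ) n])
  have hu : Tendsto u atTop (nhds 0) :=
    tendsto_const_nhds.div_atTop (tendsto_atTop_add_const_right _ _ tendsto_natCast_atTop_atTop)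
  have hbd (n : ℕ) {z : Plane} (hz : ‖z‖ < 1) :
      ‖(∫ y, F y • fderiv ℝ (bumpPot χ (u n)) (z - y)) -
        ∫ y, F y • fderiv ℝ (bumpPot χ 0) (z - y)‖ ≤ u n ^ (1 / 4 : ℝ) * J := by
    rw [← integral_sub (integrable_smul_fderiv_bumpPot hFi (hu0 n).ne' z) (I0 hz), ← hJ z,
      ← integral_const_mul]
    refine norm_integral_le_of_norm_le ((Iw z).const_mul _) ?_
    filter_upwards [ae_ne z, ae_ne_zero] with y hy hy0
    exact hpt (hu0 n) ((hu2 n).trans (by norm_num)) hz hy hy0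
  have hunif : TendstoUniformlyOn (fun n z => ∫ y, F y • fderiv ℝ (bumpPot χ (u n)) (z - y))
      (fun z => ∫ y, F y • fderiv ℝ (bumpPot χ 0) (z - y)) atTop (ball 0 1) := by
    rw [Metric.tendstoUniformlyOn_iff]
    intro e he
    have h1 : Tendsto (fun n => u n ^ (1 / 4 : ℝ) * J) atTop (nhds 0) := by
      have := (hu.rpow_const (p := 1 / 4) (Or.inr (by norm_num))).mul_const J
      rwa [Real.zero_rpow (by norm_num), zero_mul] at this
    filter_upwards [h1.eventually (gt_mem_nhds he)] with n hn z hz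
    rw [dist_comm, dist_eq_norm]
    exact (hbd n (by simpa using hz)).trans_lt hn
  have hder {z : Plane} (hz : z ∈ ball (0 : Plane) 1) :
      HasFDerivAt (fun z => ∫ y, F y * bumpPot χ 0 (z - y))
        (∫ y, F y • fderiv ℝ (bumpPot χ 0) (z - y)) z := by
    refine hasFDerivAt_of_tendstoUniformlyOn isOpen_ball hunif
      (fun n z _ => hasFDerivAt_integral_bumpPot hFi (hu0 n).ne' z) (fun z hz => ?_) hz
    refine tendsto_integral_of_dominated_convergence (fun y => F y * bumpPot χ 0 (z - y))
      (fun n => hFi.aestronglyMeasurable.mul ((measurable_bumpPot χ _).comp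
        (measurable_const.sub measurable_id)).aestronglyMeasurable)
      (integrable_mul_bumpPot_of_le hχ hFi hF hρ hF0 hA0 hA (by simpa using hz)) (fun n => ?_) ?_
    · filter_upwards [ae_ne z] with y hy
      rw [Real.norm_of_nonneg (mul_nonneg (hF y) (bumpPot_nonneg hχ (hu0 n).le (hu2 n) _))]
      exact mul_le_mul_of_nonneg_left (bumpPot_le_zero_left _ (sub_ne_zero.2 hy.symm)) (hF y)
    · filter_upwards [ae_ne z] with y hy
      exact ((tendsto_logPot (sub_ne_zero.2 hy.symm) hu).const_mul _).const_mul _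
  have hcont : ContinuousOn (fun z => ∫ y, F y • fderiv ℝ (bumpPot χ 0) (z - y)) (ball 0 1) := by
    refine hunif.continuousOn (Frequently.of_forall fun n => Continuous.continuousOn ?_)
    have h1 := ((bumpPot_hasCompactSupport χ (u n)).fderiv ℝ).continuous_convolution_right
      (ContinuousLinearMap.lsmul ℝ ℝ) hFi.locallyIntegrable
      (continuous_fderiv_bumpPot (hu0 n).ne')
    exact h1
  rw [show (1 : WithTop ℕ∞) = 0 + 1 by simp, contDiffOn_succ_iff_fderiv_of_isOpen isOpen_ball]
  refine ⟨fun z hz => (hder hz).differentiableAt.differentiableWithinAt, by simp, ?_⟩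
  exact contDiffOn_zero.2 (hcont.congr fun z hz => (hder hz).fderiv)

end Potential

/-- Dichotomy for nonnegative solutions of `0 ≤ -Δv ≤ C e^{2v}` in a punctured disk. -/
theorem PosSuperharmonic.dichotomy {R C : ℝ} {v : Plane → ℝ} (h : PosSuperharmonic R v)
    (hR : 0 < R) (hC : 0 < C) (hv : ∀ y ∈ pdisk R, -lap v y ≤ C * Real.exp (2 * v y)) :
    (∃ (ε : ℝ) (g : Plane → ℝ), 0 < ε ∧ ε ≤ R ∧ ContDiffOn ℝ 1 g (ball 0 ε) ∧
      Set.EqOn v g (ball 0 ε \ {0})) ∨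
    ∃ m : ℝ, 0 < m ∧ Tendsto (fun z => v z / logPot 0 z) (nhdsWithin 0 {0}ᶜ) (nhds m) := by
  have hm : 0 < min R 1 := lt_min hR one_pos
  have hmR : min R 1 ≤ R := min_le_left _ _
  have hm1 : min R 1 ≤ 1 := min_le_right _ _
  let χ : ContDiffBump (0 : Plane) := ⟨min R 1 / 4, min R 1 / 2, by linarith, by linarith⟩
  have hin : χ.rIn = min R 1 / 4 := rfl
  have hout : χ.rOut = min R 1 / 2 := rfl
  have hρR : χ.rIn + χ.rOut < R := by linarith
  have hρ1 : χ.rIn + χ.rOut < 1 := by linarith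
  have hχ : χ.rOut ≤ 1 / 2 := by linarith
  obtain ⟨M, H, hH, hrep⟩ := exists_representation h hρR hχ
  have hκ := potMass_pos
  have hlim := tendsto_div_logPot h hρR hχ hC hv hH.continuous hrep
  have hM : 0 ≤ M / potMass := by
    refine ge_of_tendsto hlim ?_
    filter_upwards [eventually_norm_lt hm] with z hz
    exact div_nonneg (h.2 z ⟨norm_pos_iff.2 hz.1, by linarith⟩) (logPot_zero_nonneg (by linarith))
  rcases hM.eq_or_lt with hM0 | hM0
  · have hM0' : M = 0 := by
      rcases div_eq_zero_iff.1 hM0.symm with h1 | h1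
      exacts [h1, absurd h1 hκ.ne']
    subst hM0'
    left
    obtain ⟨A, hA0, hA⟩ := exists_source_le h hρR hχ hC hv hH.continuous hrep
    have hN := contDiffOn_integral_bumpPot hχ (source_integrable h hρR hρ1)
      (source_nonneg h hρR) hρ1.le (fun y hy => source_eq_zero hy) hA0 hA
    refine ⟨χ.rIn, fun z => potMass⁻¹ * (H z +
      ∫ y, source (χ.rIn + χ.rOut) v y * bumpPot χ 0 (z - y)), χ.rIn_pos, by linarith, ?_,
      fun z hz => ?_⟩
    · exact contDiffOn_const.mul (hH.contDiffOn.add (hN.mono (ball_subset_ball (by linarith))))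
    · have h1 := hrep z hz.2 (by simpa using hz.1)
      rw [zero_mul, add_zero] at h1
      exact (eq_inv_mul_iff_mul_eq₀ hκ.ne').2 h1
  · exact Or.inr ⟨_, hM0, hlim⟩

lemma lap_sub_const (v : Plane → ℝ) (c : ℝ) : lap (fun z => v z - c) = lap v := by
  funext z
  simp only [lap, fderiv_sub_const]

end Plane

/-- (Taliaferro) Let `v` be a `C²` solution, bounded from below, of `0 ≤ -Δv ≤ C e^{2v}` on a
punctured disk `{0 < |z| < R}` around the origin of `ℝ²`. Then either `v` extends to a
`C¹` function on a neighborhood of the origin, or `v(z)/log(1/|z|) → m₁` as `|z| → 0⁺`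
for some finite positive number `m₁`. -/
theorem taliaferro_dichotomy_bounded_below
    (R C : ℝ) (hR : 0 < R) (hC : 0 < C)
    (v : EuclideanSpace ℝ (Fin 2) → ℝ)
    (hv : ContDiffOn ℝ 2 v {z | 0 < ‖z‖ ∧ ‖z‖ < R})
    (hbdd : ∃ c : ℝ, ∀ z : EuclideanSpace ℝ (Fin 2), 0 < ‖z‖ → ‖z‖ < R → c ≤ v z)
    (hineq : ∀ z : EuclideanSpace ℝ (Fin 2), 0 < ‖z‖ → ‖z‖ < R →
      0 ≤ -lap v z ∧ -lap v z ≤ C * Real.exp (2 * v z)) :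
    (∃ ε : ℝ, ∃ g : EuclideanSpace ℝ (Fin 2) → ℝ, 0 < ε ∧ ε ≤ R ∧
        ContDiffOn ℝ 1 g (ball (0 : EuclideanSpace ℝ (Fin 2)) ε) ∧
        Set.EqOn v g (ball (0 : EuclideanSpace ℝ (Fin 2)) ε \ {0})) ∨
    (∃ m₁ : ℝ, 0 < m₁ ∧
      Tendsto (fun z => v z / Real.log (1 / ‖z‖))
        (nhdsWithin (0 : EuclideanSpace ℝ (Fin 2)) {0}ᶜ) (nhds m₁)) := by
  obtain ⟨c, hc⟩ := hbdd
  have h : Plane.PosSuperharmonic R fun z => v z - c :=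
    ⟨hv.sub contDiffOn_const, fun z hz => sub_nonneg.2 (hc z hz.1 hz.2), fun z hz => by
      rw [Plane.lap_sub_const]; exact (hineq z hz.1 hz.2).1⟩
  rcases h.dichotomy hR (C := C * Real.exp (2 * c)) (by positivity) (fun z hz => by
    rw [Plane.lap_sub_const, mul_assoc, ← Real.exp_add, mul_sub, add_sub_cancel]
    exact (hineq z hz.1 hz.2).2) with ⟨ε, g, hε, hεR, hg, hvg⟩ | ⟨m, hm, hlim⟩
  · refine Or.inl ⟨ε, fun z => g z + c, hε, hεR, hg.add contDiffOn_const, fun z hz => ?_⟩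
    change v z = g z + c
    rw [← hvg hz, sub_add_cancel]
  · refine Or.inr ⟨m, hm, ?_⟩
    have h1 := hlim.add (Plane.tendsto_logPot_zero.const_div_atTop c)
    rw [add_zero] at h1
    refine h1.congr fun z => ?_
    rw [← add_div, sub_add_cancel, Plane.logPot_zero_eq, one_div, Real.log_inv]
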